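/- arXiv:2406.13989 — 2 statements merged into one kernel-verified Lean document; each statement's English description precedes it below -/
import Mathlib

section
/- (Degree bounds in the induced item-item graph, Lemma A.2) Suppose np ≥ C κ₂² log(n) for a sufficiently large universal constant C > 0, mp ≥ 2, and m ≤ n^α for some constant α > 0. Then with probability at least 1 − 2n^{−10}, for all i ∈ [m], the weighted degree d_i := Σ_{j ≠ i} L_{ij} of item i in the item-item comparison graph G_Y satisfies np/(24 κ₂) ≤ d_i ≤ (3/2) np. -/
open MeasureTheory ProbabilityTheory Matrix Finset

namespace RaschRP

variable {n m : ℕ}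

/-- Probability that `X t i = 1` in the Rasch model. -/
noncomputable def q (ζ : Fin n → ℝ) (θ : Fin m → ℝ) (t : Fin n) (i : Fin m) : ℝ :=
  Real.exp (θ i) / (Real.exp (ζ t) + Real.exp (θ i))

/-- The set of items observed by user `t` under the sampling configuration `a`. -/
def obs (a : Fin n → Fin m → Bool) (t : Fin n) : Finset (Fin m) :=
  Finset.univ.filter fun i => a t i = true

/-- `r` is a maximal disjoint pairing (partial matching with `⌊|s|/2⌋` pairs) of the
item set `s`. -/
def IsPairing (s : Finset (Fin m)) (r : Fin m → Fin m → Bool) : Prop :=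
  (∀ i j, r i j = r j i) ∧ (∀ i, r i i = false) ∧
    (∀ i j, r i j = true → i ∈ s ∧ j ∈ s) ∧
    (∀ i j k, r i j = true → r i k = true → j = k) ∧
    (Finset.univ.filter fun ij : Fin m × Fin m => ij.1 < ij.2 ∧ r ij.1 ij.2 = true).card
      = s.card / 2

/-- The number of maximal disjoint pairings of `s`. -/
noncomputable def pairingCount (s : Finset (Fin m)) : ℕ :=
  Nat.card {r : Fin m → Fin m → Bool // IsPairing s r}

/-- `ℓ t i j = true` iff items `i, j` were paired for user `t` and the two responses were
discordant (an effective item-item comparison). -/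
def disc (x : Fin n → Fin m → Bool) (r : Fin n → Fin m → Fin m → Bool) :
    Fin n → Fin m → Fin m → Bool :=
  fun t i j => r t i j && (x t i != x t j)

/-- `L_{ij}`, the number of effective comparisons between items `i` and `j`. -/
def Lcount (ℓ : Fin n → Fin m → Fin m → Bool) (i j : Fin m) : ℕ :=
  ∑ t, if ℓ t i j = true then 1 else 0

/-- The negative log-likelihood of the induced item-item (Bradley–Terry) comparisons:
`L(θ) = Σ_{i>j} Σ_{t : L^t_{ij} = 1} ( −Y^t_{ji}(θ_i − θ_j) + log(1 + e^{θ_i − θ_j}) )`. -/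
noncomputable def loss (x : Fin n → Fin m → Bool) (ℓ : Fin n → Fin m → Fin m → Bool)
    (θ : Fin m → ℝ) : ℝ :=
  ∑ t, ∑ i, ∑ j,
    if j < i ∧ ℓ t i j = true then
      -(if x t i = true ∧ x t j = false then θ i - θ j else 0)
        + Real.log (1 + Real.exp (θ i - θ j))
    else 0

/-- The Bradley–Terry variance weight `z_{ij}(θ) = e^{θ_i} e^{θ_j}/(e^{θ_i}+e^{θ_j})²`. -/
noncomputable def z (θ : Fin m → ℝ) (i j : Fin m) : ℝ :=
  Real.exp (θ i) * Real.exp (θ j) / (Real.exp (θ i) + Real.exp (θ j)) ^ 2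

/-- The unweighted item-item Laplacian `L_L = Σ_{i>j} L_{ij}(e_i−e_j)(e_i−e_j)ᵀ`. -/
noncomputable def lapL (ℓ : Fin n → Fin m → Fin m → Bool) : Matrix (Fin m) (Fin m) ℝ :=
  ∑ ij : Fin m × Fin m,
    if ij.2 < ij.1 then
      (Lcount ℓ ij.1 ij.2 : ℝ) •
        Matrix.vecMulVec (Pi.single ij.1 (1 : ℝ) - Pi.single ij.2 1)
          (Pi.single ij.1 (1 : ℝ) - Pi.single ij.2 1)
    else 0

/-- The weighted item-item Laplacian `L_{Lz̃} = Σ_{i>j} L_{ij} z̃_{ij}(e_i−e_j)(e_i−e_j)ᵀ`,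
with weights `z̃ = z(θ)` computed from the parameter vector `θ`. -/
noncomputable def lapLz (θ : Fin m → ℝ) (ℓ : Fin n → Fin m → Fin m → Bool) :
    Matrix (Fin m) (Fin m) ℝ :=
  ∑ ij : Fin m × Fin m,
    if ij.2 < ij.1 then
      ((Lcount ℓ ij.1 ij.2 : ℝ) * z θ ij.1 ij.2) •
        Matrix.vecMulVec (Pi.single ij.1 (1 : ℝ) - Pi.single ij.2 1)
          (Pi.single ij.1 (1 : ℝ) - Pi.single ij.2 1)
    else 0

/-- `Mdag` is the Moore–Penrose pseudo-inverse of `M`. -/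
def IsMoorePenrose {k : ℕ} (M Mdag : Matrix (Fin k) (Fin k) ℝ) : Prop :=
  M * Mdag * M = M ∧ Mdag * M * Mdag = Mdag ∧ (M * Mdag)ᵀ = M * Mdag ∧
    (Mdag * M)ᵀ = Mdag * M

open scoped Classical in
/-- The Moore–Penrose pseudo-inverse of a square real matrix. -/
noncomputable def pinv {k : ℕ} (M : Matrix (Fin k) (Fin k) ℝ) : Matrix (Fin k) (Fin k) ℝ :=
  if h : ∃ N, IsMoorePenrose M N then h.choose else 0

/-- The gradient `∇L(θ)` of the negative log-likelihood `loss`, evaluated via the explicit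
formula `∇L(θ) = Σ_{i>j} Σ_{t : L^t_{ij}=1} (−Y^t_{ji} + σ(θ_i − θ_j)) (e_i − e_j)`. -/
noncomputable def gradLoss (θ : Fin m → ℝ) (x : Fin n → Fin m → Bool)
    (ℓ : Fin n → Fin m → Fin m → Bool) : Fin m → ℝ :=
  fun l => ∑ t, ∑ i, ∑ j,
    if j < i ∧ ℓ t i j = true then
      (-(if x t i = true ∧ x t j = false then (1 : ℝ) else 0)
          + Real.exp (θ i) / (Real.exp (θ i) + Real.exp (θ j)))
        * ((if l = i then (1 : ℝ) else 0) - if l = j then 1 else 0)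
    else 0

/-- The product `B ε̂ ∈ ℝ^m`, i.e.
`Σ_{i>j} Σ_{t : L^t_{ij}=1} (Y^t_{ji} − σ(θ⋆_i − θ⋆_j)) (e_i − e_j)`. -/
noncomputable def Beps (θ : Fin m → ℝ) (x : Fin n → Fin m → Bool)
    (ℓ : Fin n → Fin m → Fin m → Bool) : Fin m → ℝ :=
  fun l => ∑ t, ∑ i, ∑ j,
    if j < i ∧ ℓ t i j = true then
      ((if x t i = true ∧ x t j = false then (1 : ℝ) else 0)
          - Real.exp (θ i) / (Real.exp (θ i) + Real.exp (θ j)))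
        * ((if l = i then (1 : ℝ) else 0) - if l = j then 1 else 0)
    else 0

/-- The complete law of the data of the RP-MLE model with `K` independent random splittings:
the sampling indicators `A` are i.i.d. Bernoulli(`p`), the responses `X` are independent
with `P[X t i = 1] = e^{θ_i}/(e^{ζ_t}+e^{θ_i})`, and, conditionally on `A`, each of the `K`
random pairings is uniformly distributed over the maximal disjoint pairings of each user's
observed items, independently of everything else. -/
def HasRaschLaw {Ω : Type*} [MeasurableSpace Ω] (P : Measure Ω) {K : ℕ}
    (p : ℝ) (ζ : Fin n → ℝ) (θ : Fin m → ℝ)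
    (A X : Ω → Fin n → Fin m → Bool)
    (R : Ω → Fin K → Fin n → Fin m → Fin m → Bool) : Prop :=
  (∀ ω k t, IsPairing (obs (A ω) t) (R ω k t)) ∧
    ∀ (a x : Fin n → Fin m → Bool) (r : Fin K → Fin n → Fin m → Fin m → Bool),
      (∀ k' t, IsPairing (obs a t) (r k' t)) →
      P {ω | A ω = a ∧ X ω = x ∧ R ω = r} =
        ENNReal.ofReal ((∏ t, ∏ i, if a t i then p else 1 - p) *
          (∏ t, ∏ i, if x t i then q ζ θ t i else 1 - q ζ θ t i) *
          ∏ k : Fin K, ∏ t, ((pairingCount (obs a t) : ℝ))⁻¹)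

/-- `θhat` is an RP-MLE: a minimizer of the induced Bradley–Terry negative log-likelihood
over the hyperplane `{θ : 1ᵀθ = 0}`. -/
def IsRPMLE (x : Fin n → Fin m → Bool) (ℓ : Fin n → Fin m → Fin m → Bool)
    (θhat : Fin m → ℝ) : Prop :=
  (∑ i, θhat i) = 0 ∧
    ∀ θ' : Fin m → ℝ, (∑ i, θ' i) = 0 → loss x ℓ θhat ≤ loss x ℓ θ'

end RaschRP

namespace RaschRP

section Bernoulli

variable {ι : Type*} [Fintype ι]

/-- Mass of a configuration `x` under the product of Bernoulli laws with parameters `u`. -/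
noncomputable def bernWeight (u : ι → ℝ) (x : ι → Bool) : ℝ :=
  ∏ k, if x k then u k else 1 - u k

lemma bernWeight_nonneg {u : ι → ℝ} (h0 : ∀ k, 0 ≤ u k) (h1 : ∀ k, u k ≤ 1) (x : ι → Bool) :
    0 ≤ bernWeight u x := by
  refine Finset.prod_nonneg fun k _ => ?_
  split_ifs
  · exact h0 k
  · linarith [h1 k]

variable [DecidableEq ι]

lemma sum_bool_prod (h : ι → Bool → ℝ) :
    ∑ x : ι → Bool, ∏ k, h k (x k) = ∏ k, (h k true + h k false) := by
  rw [← Fintype.piFinset_univ, ← Finset.prod_univ_sum]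
  simp

lemma sum_bernWeight (u : ι → ℝ) : ∑ x, bernWeight u x = 1 := by
  have := sum_bool_prod (fun k b => if b then u k else 1 - u k)
  simpa [bernWeight] using this

lemma sum_bernWeight_eval (u : ι → ℝ) (i : ι) :
    ∑ x, bernWeight u x * (if x i then 1 else 0) = u i := by
  have := sum_bool_prod
    (fun k b => (if b then u k else 1 - u k) * (if k = i then (if b then 1 else 0) else 1))
  simp only [Finset.prod_mul_distrib, Finset.prod_ite_eq', Finset.mem_univ, if_true] at this
  rw [show u i = ∏ k, (if k = i then u i else 1) by simp]
  refine (this.trans (Finset.prod_congr rfl fun k _ => ?_))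
  by_cases hk : k = i <;> simp [hk]

lemma sum_bernWeight_eval_mul (u : ι → ℝ) {i j : ι} (hij : i ≠ j) :
    ∑ x, bernWeight u x * ((if x i then 1 else 0) * (if x j then 1 else 0)) = u i * u j := by
  have := sum_bool_prod
    (fun k b => (if b then u k else 1 - u k) *
      ((if k = i then (if b then 1 else 0) else 1) * (if k = j then (if b then 1 else 0) else 1)))
  simp only [Finset.prod_mul_distrib, Finset.prod_ite_eq', Finset.mem_univ, if_true] at this
  rw [show u i * u j = ∏ k, ((if k = i then u i else 1) * (if k = j then u j else 1)) by
    rw [Finset.prod_mul_distrib]; simp]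
  refine (this.trans (Finset.prod_congr rfl fun k _ => ?_))
  by_cases hk : k = i
  · subst hk; simp [hij]
  · by_cases hk' : k = j
    · subst hk'; simp [hk]
    · simp [hk, hk']

/-- Probability that two distinct coordinates disagree. -/
lemma sum_bernWeight_ne (u : ι → ℝ) {i j : ι} (hij : i ≠ j) :
    ∑ x, bernWeight u x * (if x i ≠ x j then 1 else 0) = u i + u j - 2 * (u i * u j) := by
  rw [← sum_bernWeight_eval_mul u hij, ← sum_bernWeight_eval u i, ← sum_bernWeight_eval u j,
    Finset.mul_sum, ← Finset.sum_add_distrib, ← Finset.sum_sub_distrib]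
  refine Finset.sum_congr rfl fun x _ => ?_
  cases x i <;> cases x j <;> (simp; try ring)

/-- Probability that the coordinate `i` and at least one other coordinate are `true`. -/
lemma sum_bernWeight_eval_exists (p : ℝ) (i : ι) :
    ∑ x, bernWeight (fun _ => p) x * (if x i ∧ ∃ j, j ≠ i ∧ x j = true then 1 else 0) =
      p * (1 - (1 - p) ^ (Fintype.card ι - 1)) := by
  have hs : ∑ x, bernWeight (fun _ : ι => p) x * (if x = fun k => decide (k = i) then 1 else 0) =
      p * (1 - p) ^ (Fintype.card ι - 1) := by
    simp only [mul_ite, mul_one, mul_zero, Finset.sum_ite_eq', Finset.mem_univ, if_true]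
    rw [bernWeight, ← Finset.mul_prod_erase _ _ (Finset.mem_univ i)]
    rw [Finset.prod_congr rfl (g := fun _ => 1 - p)]
    · simp
    · intro k hk
      simp [Finset.ne_of_mem_erase hk]
  rw [mul_sub, ← hs, mul_one]
  refine Eq.trans ?_ (congrArg (· - _) (sum_bernWeight_eval (fun _ : ι => p) i))
  rw [← Finset.sum_sub_distrib]
  refine Finset.sum_congr rfl fun x _ => ?_
  rw [← mul_sub]
  congr 1
  by_cases hi : x i = true
  · by_cases he : ∃ j, j ≠ i ∧ x j = true
    · have : x ≠ fun k => decide (k = i) := by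
        rintro rfl
        obtain ⟨j, hj, h⟩ := he
        simp [hj] at h
      simp [hi, he, this]
    · have : x = fun k => decide (k = i) := by
        funext k
        by_cases hk : k = i
        · simp [hk, hi]
        · push Not at he
          simpa [hk] using he k hk
      rw [if_neg (fun h => he h.2), if_pos hi, if_pos this]
      simp
  · have : x ≠ fun k => decide (k = i) := by
      rintro rfl
      simp at hi
    simp [hi, this]

end Bernoulli

section Pairing

variable {m : ℕ}

/-- Number of partners of `i` in `r`. -/
def partners (r : Fin m → Fin m → Bool) (i : Fin m) : ℕ :=
  ∑ j, if r i j = true then 1 else 0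

lemma sum_partners {r : Fin m → Fin m → Bool} (hs : ∀ i j, r i j = r j i)
    (hi : ∀ i, r i i = false) :
    ∑ i, partners r i =
      2 * (Finset.univ.filter fun ij : Fin m × Fin m => ij.1 < ij.2 ∧ r ij.1 ij.2 = true).card := by
  have hlt : (Finset.univ.filter fun ij : Fin m × Fin m => ij.1 < ij.2 ∧ r ij.1 ij.2 = true).card
      = ∑ i, ∑ j, if i < j ∧ r i j = true then 1 else 0 := by
    rw [Finset.card_filter, Fintype.sum_prod_type]
  have hgt : ∑ i, ∑ j, (if i < j ∧ r i j = true then 1 else 0) =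
      ∑ i, ∑ j, if j < i ∧ r i j = true then 1 else 0 := by
    rw [Finset.sum_comm]
    simp only [hs]
  rw [two_mul, hlt]
  nth_rewrite 2 [hgt]
  simp only [partners, ← Finset.sum_add_distrib]
  refine Finset.sum_congr rfl fun i _ => Finset.sum_congr rfl fun j _ => ?_
  rcases lt_trichotomy i j with h | h | h
  · simp [h, h.not_gt]
  · subst h; simp [hi]
  · simp [h, h.not_gt]

lemma IsPairing.partners_le_one {s : Finset (Fin m)} {r : Fin m → Fin m → Bool}
    (h : IsPairing s r) (i : Fin m) : partners r i ≤ 1 := by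
  rw [partners, ← Finset.card_filter, Finset.card_le_one]
  intro a ha b hb
  simp only [Finset.mem_filter, Finset.mem_univ, true_and] at ha hb
  exact h.2.2.2.1 i a b ha hb

lemma IsPairing.partners_eq_zero {s : Finset (Fin m)} {r : Fin m → Fin m → Bool}
    (h : IsPairing s r) {i : Fin m} (hi : i ∉ s) : partners r i = 0 := by
  rw [partners, Finset.sum_eq_zero]
  intro j _
  rw [if_neg fun hr => hi (h.2.2.1 i j hr).1]

lemma isPairing_iff {s : Finset (Fin m)} {r : Fin m → Fin m → Bool} :
    IsPairing s r ↔ (∀ i j, r i j = r j i) ∧ (∀ i, r i i = false) ∧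
      (∀ i j, r i j = true → i ∈ s ∧ j ∈ s) ∧
      (∀ i j k, r i j = true → r i k = true → j = k) ∧
      ∑ i, partners r i = 2 * (s.card / 2) := by
  unfold IsPairing
  constructor
  · rintro ⟨h1, h2, h3, h4, h5⟩
    exact ⟨h1, h2, h3, h4, by rw [sum_partners h1 h2, h5]⟩
  · rintro ⟨h1, h2, h3, h4, h5⟩
    rw [sum_partners h1 h2] at h5
    exact ⟨h1, h2, h3, h4, by omega⟩

lemma exists_isPairing (s : Finset (Fin m)) : ∃ r, IsPairing s r := by
  induction hk : s.card using Nat.strong_induction_on generalizing s with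
  | _ k ih =>
  by_cases h2 : s.card < 2
  · refine ⟨fun _ _ => false, ?_⟩
    simp only [isPairing_iff]
    refine ⟨by simp, by simp, by simp, by simp, ?_⟩
    simp [partners]; omega
  · obtain ⟨u, hu, v, hv, huv⟩ := Finset.one_lt_card.1 (by omega : 1 < s.card)
    set s' := (s.erase u).erase v with hs'
    have hc : s'.card + 2 = s.card := by
      have h1 := Finset.card_erase_add_one hu
      have h3 := Finset.card_erase_add_one (Finset.mem_erase.2 ⟨huv.symm, hv⟩)
      rw [← hs'] at h3
      omega
    obtain ⟨r, hr⟩ := ih s'.card (by omega) s' rfl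
    have hru := hr.partners_eq_zero (i := u) (by simp [hs'])
    have hrv := hr.partners_eq_zero (i := v) (by simp [hs'])
    have hu0 : ∀ j, r u j = false := by simpa [partners] using hru
    have hv0 : ∀ j, r v j = false := by simpa [partners] using hrv
    rw [isPairing_iff] at hr
    obtain ⟨h1, h2', h3, h4, h5⟩ := hr
    have hu0' : ∀ j, r j u = false := fun j => (h1 j u).trans (hu0 j)
    have hv0' : ∀ j, r j v = false := fun j => (h1 j v).trans (hv0 j)
    refine ⟨fun i j => r i j || decide (i = u ∧ j = v) || decide (i = v ∧ j = u), ?_⟩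
    rw [isPairing_iff]
    refine ⟨?_, ?_, ?_, ?_, ?_⟩
    · intro i j
      rw [h1 i j]
      grind
    · intro i
      grind
    · intro i j h
      have := h3 i j
      grind
    · intro i j k hj hk
      have := h4 i j k
      grind
    · have hp : ∀ i, partners (fun i j => r i j || decide (i = u ∧ j = v) ||
          decide (i = v ∧ j = u)) i =
          partners r i + (if i = u then 1 else 0) + (if i = v then 1 else 0) := by
        intro i
        rw [partners, partners,
          show (if i = u then 1 else 0) = ∑ j, if j = v then (if i = u then 1 else 0) else 0 by simp,
          show (if i = v then 1 else 0) = ∑ j, if j = u then (if i = v then 1 else 0) else 0 by simp,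
          ← Finset.sum_add_distrib, ← Finset.sum_add_distrib]
        refine Finset.sum_congr rfl fun j _ => ?_
        by_cases hr : r i j = true
        · have hiu : i ≠ u := by rintro rfl; simp [hu0] at hr
          have hiv : i ≠ v := by rintro rfl; simp [hv0] at hr
          simp [hr, hiu, hiv]
        · by_cases hiu : i = u
          · subst hiu; simp [hr, huv]
          · by_cases hiv : i = v
            · subst hiv; simp [hr, hiu]
            · simp [hr, hiu, hiv]
      simp only [hp, Finset.sum_add_distrib, h5]
      simp
      omega

lemma pairingCount_pos (s : Finset (Fin m)) : 0 < pairingCount s := by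
  obtain ⟨r, hr⟩ := exists_isPairing s
  have : Nonempty {r : Fin m → Fin m → Bool // IsPairing s r} := ⟨⟨r, hr⟩⟩
  exact Nat.card_pos

open scoped Classical in
lemma pairingCount_eq_sum (s : Finset (Fin m)) :
    pairingCount s = ∑ r : Fin m → Fin m → Bool, if IsPairing s r then 1 else 0 := by
  rw [pairingCount, Nat.card_eq_fintype_card, Fintype.card_subtype, Finset.card_filter]

open scoped Classical in
/-- Number of maximal pairings of `s` in which `i` has a partner. -/
noncomputable def pairedCount (s : Finset (Fin m)) (i : Fin m) : ℕ :=
  ∑ r : Fin m → Fin m → Bool, if IsPairing s r then partners r i else 0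

lemma partners_conj (σ : Equiv.Perm (Fin m)) (r : Fin m → Fin m → Bool) (k : Fin m) :
    partners (fun a b => r (σ a) (σ b)) k = partners r (σ k) := by
  unfold partners
  exact Equiv.sum_comp σ (fun j => if r (σ k) j = true then 1 else 0)

lemma IsPairing.conj {s : Finset (Fin m)} {r : Fin m → Fin m → Bool} (h : IsPairing s r)
    (σ : Equiv.Perm (Fin m)) (hσ : ∀ k, σ k ∈ s ↔ k ∈ s) :
    IsPairing s (fun a b => r (σ a) (σ b)) := by
  rw [isPairing_iff] at h ⊢
  obtain ⟨h1, h2, h3, h4, h5⟩ := h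
  refine ⟨fun a b => h1 _ _, fun a => h2 _, fun a b hab => ?_, fun a b c hb hc => ?_, ?_⟩
  · have := h3 _ _ hab
    rwa [hσ, hσ] at this
  · exact σ.injective (h4 _ _ _ hb hc)
  · rw [← h5, ← Equiv.sum_comp σ (partners r)]
    exact Finset.sum_congr rfl fun k _ => partners_conj σ r k

lemma pairedCount_congr {s : Finset (Fin m)} {i j : Fin m} (hi : i ∈ s) (hj : j ∈ s) :
    pairedCount s i = pairedCount s j := by
  classical
  set σ := Equiv.swap i j with hσdef
  have hσσ : ∀ k, σ (σ k) = k := fun k => Equiv.swap_apply_self i j k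
  have hσ : ∀ k, σ k ∈ s ↔ k ∈ s := by
    intro k
    rw [hσdef, Equiv.swap_apply_def]
    split_ifs with h1 h2
    · subst h1; simp [hi, hj]
    · subst h2; simp [hi, hj]
    · rfl
  have hinv : Function.Involutive
      (fun (r : Fin m → Fin m → Bool) => fun a b => r (σ a) (σ b)) := by
    intro r
    simp [hσσ]
  unfold pairedCount
  rw [← Equiv.sum_comp hinv.toPerm]
  refine Finset.sum_congr rfl fun r _ => ?_
  simp only [Function.Involutive.coe_toPerm, partners_conj]
  have hiff : IsPairing s (fun a b => r (σ a) (σ b)) ↔ IsPairing s r := by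
    refine ⟨fun h => ?_, fun h => h.conj σ hσ⟩
    have := h.conj σ hσ
    simpa [hσσ] using this
  rw [show σ i = j from Equiv.swap_apply_left i j]
  simp only [hiff]

lemma card_mul_pairedCount {s : Finset (Fin m)} {i : Fin m} (hi : i ∈ s) :
    s.card * pairedCount s i = 2 * (s.card / 2) * pairingCount s := by
  classical
  have h1 : s.card * pairedCount s i = ∑ k ∈ s, pairedCount s k := by
    rw [Finset.sum_congr rfl fun k hk => pairedCount_congr hk hi]
    simp
  have h2 : ∑ k ∈ s, pairedCount s k = ∑ k, pairedCount s k := by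
    refine Finset.sum_subset (Finset.subset_univ s) fun k _ hk => ?_
    refine Finset.sum_eq_zero fun r _ => ?_
    split_ifs with h
    · exact h.partners_eq_zero hk
    · rfl
  rw [h1, h2]
  unfold pairedCount
  rw [Finset.sum_comm, pairingCount_eq_sum, Finset.mul_sum]
  refine Finset.sum_congr rfl fun r _ => ?_
  by_cases h : IsPairing s r
  · simpa [h] using (isPairing_iff.1 h).2.2.2.2
  · simp [h]

lemma two_thirds_mul_le_pairedCount {s : Finset (Fin m)} {i : Fin m} (hi : i ∈ s)
    (hs : 2 ≤ s.card) : 2 * pairingCount s ≤ 3 * pairedCount s i := by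
  have h := card_mul_pairedCount hi
  have h3 : 2 * s.card ≤ 3 * (2 * (s.card / 2)) := by omega
  have h4 := Nat.mul_le_mul_right (pairingCount s) h3
  have h5 : 0 < s.card := by omega
  refine Nat.le_of_mul_le_mul_left ?_ h5
  nlinarith

end Pairing

section User

variable {m : ℕ}

/-- The items observed by a single user. -/
def obsUser (a : Fin m → Bool) : Finset (Fin m) := Finset.univ.filter fun i => a i = true

/-- Number of effective comparisons involving item `i` made by a single user. -/
def userDeg (x : Fin m → Bool) (r : Fin m → Fin m → Bool) (i : Fin m) : ℕ :=
  ∑ j, if j ≠ i ∧ (r i j && (x i != x j)) = true then 1 else 0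

open scoped Classical in
/-- Joint mass of the sampling indicators `a`, responses `x` and pairing `r` of a single user. -/
noncomputable def userWeight (p : ℝ) (u : Fin m → ℝ)
    (y : (Fin m → Bool) × (Fin m → Bool) × (Fin m → Fin m → Bool)) : ℝ :=
  if IsPairing (obsUser y.1) y.2.2 then
    bernWeight (fun _ => p) y.1 * bernWeight u y.2.1 * ((pairingCount (obsUser y.1) : ℝ))⁻¹
  else 0

lemma userDeg_le_partners (x : Fin m → Bool) (r : Fin m → Fin m → Bool) (i : Fin m) :
    userDeg x r i ≤ partners r i := by
  refine Finset.sum_le_sum fun j _ => ?_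
  by_cases h : r i j = true
  · simp only [h, if_true]
    split_ifs <;> simp
  · simp [h]

variable {p : ℝ} {u : Fin m → ℝ}

lemma userWeight_nonneg (hp0 : 0 ≤ p) (hp1 : p ≤ 1) (hu0 : ∀ k, 0 ≤ u k) (hu1 : ∀ k, u k ≤ 1)
    (y : (Fin m → Bool) × (Fin m → Bool) × (Fin m → Fin m → Bool)) : 0 ≤ userWeight p u y := by
  unfold userWeight
  split_ifs
  · have h1 := bernWeight_nonneg (fun _ => hp0) (fun _ => hp1) y.1
    have h2 := bernWeight_nonneg hu0 hu1 y.2.1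
    positivity
  · exact le_rfl

/-- Marginalising out the pairing and the responses. -/
lemma sum_userWeight_mul (f : (Fin m → Bool) → ℝ) :
    ∑ y, userWeight p u y * f y.1 = ∑ a, bernWeight (fun _ => p) a * f a := by
  classical
  rw [Fintype.sum_prod_type]
  refine Finset.sum_congr rfl fun a _ => ?_
  rw [Fintype.sum_prod_type]
  have hc : (pairingCount (obsUser a) : ℝ) ≠ 0 := by
    exact_mod_cast (pairingCount_pos _).ne'
  have h : ∀ x, ∑ r, userWeight p u (a, x, r) * f a = bernWeight u x *
      (bernWeight (fun _ => p) a * f a) := by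
    intro x
    have : ∀ r, userWeight p u (a, x, r) * f a = bernWeight u x *
        (bernWeight (fun _ => p) a * f a) * (pairingCount (obsUser a) : ℝ)⁻¹ *
          (if IsPairing (obsUser a) r then 1 else 0) := by
      intro r
      unfold userWeight
      split_ifs <;> ring
    simp only [this]
    rw [← Finset.mul_sum]
    have hs : ∑ r, (if IsPairing (obsUser a) r then (1 : ℝ) else 0) = pairingCount (obsUser a) := by
      rw [pairingCount_eq_sum]; push_cast; rfl
    rw [hs, mul_assoc, inv_mul_cancel₀ hc, mul_one]
  simp only [h]
  rw [← Finset.sum_mul, sum_bernWeight, one_mul]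

lemma sum_userWeight : ∑ y, userWeight p u y = 1 := by
  have := sum_userWeight_mul (p := p) (u := u) (fun _ => 1)
  simpa [sum_bernWeight] using this

lemma userWeight_eq_zero {y : (Fin m → Bool) × (Fin m → Bool) × (Fin m → Fin m → Bool)}
    (h : ¬ IsPairing (obsUser y.1) y.2.2) : userWeight p u y = 0 := by
  simp [userWeight, h]

/-- A user makes an effective comparison involving `i` with probability at most `p`. -/
lemma sum_userWeight_deg_le (hp0 : 0 ≤ p) (hp1 : p ≤ 1) (hu0 : ∀ k, 0 ≤ u k)
    (hu1 : ∀ k, u k ≤ 1) (i : Fin m) :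
    ∑ y, userWeight p u y * (userDeg y.2.1 y.2.2 i : ℝ) ≤ p := by
  have hp := sum_userWeight_mul (p := p) (u := u) (fun a => if a i then 1 else 0)
  rw [sum_bernWeight_eval (fun _ => p) i] at hp
  refine le_of_le_of_eq (Finset.sum_le_sum fun y _ => ?_) hp
  by_cases h : IsPairing (obsUser y.1) y.2.2
  · refine mul_le_mul_of_nonneg_left ?_ (userWeight_nonneg hp0 hp1 hu0 hu1 y)
    have hd := userDeg_le_partners y.2.1 y.2.2 i
    by_cases hi : y.1 i = true
    · simp only [hi, if_true]
      exact_mod_cast hd.trans (h.partners_le_one i)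
    · have h0 := h.partners_eq_zero (i := i) (by simp [obsUser, hi])
      have : userDeg y.2.1 y.2.2 i = 0 := by omega
      simp [this, hi]
  · simp [userWeight_eq_zero h]

/-- If any two responses disagree with probability at least `δ`, a user makes an effective
comparison involving `i` with probability at least `δ` times that of `i` being paired. -/
lemma le_sum_userWeight_deg (hp0 : 0 ≤ p) (hp1 : p ≤ 1) {δ : ℝ} (hδ : 0 ≤ δ)
    (hd : ∀ i j, i ≠ j → δ ≤ u i + u j - 2 * (u i * u j)) (i : Fin m) :
    2 / 3 * δ * (p * (1 - (1 - p) ^ (m - 1))) ≤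
      ∑ y, userWeight p u y * (userDeg y.2.1 y.2.2 i : ℝ) := by
  classical
  have hE := sum_bernWeight_eval_exists p i
  rw [Fintype.card_fin] at hE
  rw [← hE, Finset.mul_sum, Fintype.sum_prod_type]
  refine Finset.sum_le_sum fun a _ => ?_
  rw [Fintype.sum_prod_type, Finset.sum_comm]
  have ha := bernWeight_nonneg (fun _ : Fin m => hp0) (fun _ => hp1) a
  have hc : (0 : ℝ) < pairingCount (obsUser a) := by exact_mod_cast pairingCount_pos _
  have hr : ∀ r, bernWeight (fun _ => p) a * (pairingCount (obsUser a) : ℝ)⁻¹ * δ *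
      ((if IsPairing (obsUser a) r then partners r i else 0 : ℕ) : ℝ) ≤
      ∑ x, userWeight p u (a, x, r) * (userDeg x r i : ℝ) := by
    intro r
    by_cases h : IsPairing (obsUser a) r
    · simp only [userWeight, h, if_true, userDeg, partners]
      push_cast
      have : ∀ x : Fin m → Bool, bernWeight (fun _ => p) a * bernWeight u x *
          (pairingCount (obsUser a) : ℝ)⁻¹ *
          (∑ j, if j ≠ i ∧ (r i j && (x i != x j)) = true then (1 : ℝ) else 0) =
          ∑ j, bernWeight (fun _ => p) a * (pairingCount (obsUser a) : ℝ)⁻¹ *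
            ((if r i j = true then 1 else 0) *
              (bernWeight u x * (if x i ≠ x j then 1 else 0))) := by
        intro x
        rw [Finset.mul_sum]
        refine Finset.sum_congr rfl fun j _ => ?_
        by_cases hij : j = i
        · subst hij; simp
        · by_cases hrj : r i j = true <;> by_cases hx : x i = x j <;> (simp [hij, hrj, hx]; try ring)
      simp only [this]
      rw [Finset.sum_comm, Finset.mul_sum]
      refine Finset.sum_le_sum fun j _ => ?_
      rw [← Finset.mul_sum, ← Finset.mul_sum, mul_assoc]
      refine mul_le_mul_of_nonneg_left ?_ (by positivity)
      by_cases hrj : r i j = true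
      · have hij : i ≠ j := by
          rintro rfl
          simp [h.2.1 i] at hrj
        rw [sum_bernWeight_ne u hij]
        simpa [hrj] using hd i j hij
      · simp [hrj]
    · simp [h, userWeight]
  refine le_trans ?_ (Finset.sum_le_sum fun r _ => hr r)
  rw [← Finset.mul_sum, ← Nat.cast_sum]
  change _ ≤ _ * (pairedCount (obsUser a) i : ℝ)
  split_ifs with h
  · obtain ⟨hi, j, hji, hj⟩ := h
    have h2 : 2 ≤ (obsUser a).card := Finset.one_lt_card.2
      ⟨i, by simpa [obsUser] using hi, j, by simpa [obsUser] using hj, hji.symm⟩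
    have h3 : (2 : ℝ) * pairingCount (obsUser a) ≤ 3 * pairedCount (obsUser a) i := by
      exact_mod_cast two_thirds_mul_le_pairedCount (by simpa [obsUser] using hi) h2
    have h4 : 2 / 3 ≤ (pairingCount (obsUser a) : ℝ)⁻¹ * pairedCount (obsUser a) i := by
      rw [inv_mul_eq_div, le_div_iff₀ hc]
      linarith
    calc _ = bernWeight (fun _ => p) a * δ * (2 / 3) := by ring
      _ ≤ bernWeight (fun _ => p) a * δ *
          ((pairingCount (obsUser a) : ℝ)⁻¹ * pairedCount (obsUser a) i) :=
        mul_le_mul_of_nonneg_left h4 (by positivity)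
      _ = _ := by ring
  · rw [mul_zero, mul_zero]
    positivity

/-- The degree contributed by a user is an indicator, so its moment generating function is
affine in its mean. -/
lemma sum_userWeight_exp (l : ℝ) (i : Fin m) :
    ∑ y, userWeight p u y * Real.exp (l * userDeg y.2.1 y.2.2 i) =
      1 + (Real.exp l - 1) * ∑ y, userWeight p u y * (userDeg y.2.1 y.2.2 i : ℝ) := by
  refine Eq.trans ?_ (congrArg (· + _) (sum_userWeight (p := p) (u := u)))
  rw [Finset.mul_sum, ← Finset.sum_add_distrib]
  refine Finset.sum_congr rfl fun y _ => ?_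
  by_cases h : IsPairing (obsUser y.1) y.2.2
  · have := (userDeg_le_partners y.2.1 y.2.2 i).trans (h.partners_le_one i)
    have h01 : userDeg y.2.1 y.2.2 i = 0 ∨ userDeg y.2.1 y.2.2 i = 1 := by omega
    rcases h01 with h0 | h0 <;> (rw [h0]; simp; try ring)
  · simp [userWeight_eq_zero h]

end User

section Chernoff

variable {n m : ℕ}

lemma q_nonneg (ζ : Fin n → ℝ) (θ : Fin m → ℝ) (t : Fin n) (i : Fin m) : 0 ≤ q ζ θ t i := by
  unfold q; positivity

lemma q_le_one (ζ : Fin n → ℝ) (θ : Fin m → ℝ) (t : Fin n) (i : Fin m) : q ζ θ t i ≤ 1 := by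
  unfold q
  rw [div_le_one (by positivity)]
  linarith [Real.exp_pos (ζ t)]

lemma q_mem_of_abs_le {ζ : Fin n → ℝ} {θ : Fin m → ℝ} {κ : ℝ} (hκ : 0 < κ) {t : Fin n} {i : Fin m}
    (h : |ζ t - θ i| ≤ Real.log κ) :
    1 / (1 + κ) ≤ q ζ θ t i ∧ q ζ θ t i ≤ κ / (1 + κ) := by
  rw [abs_le] at h
  have h1 : Real.exp (ζ t) ≤ κ * Real.exp (θ i) := by
    nth_rewrite 1 [← Real.exp_log hκ]
    rw [← Real.exp_add]
    exact Real.exp_le_exp.2 (by linarith)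
  have h2 : Real.exp (θ i) ≤ κ * Real.exp (ζ t) := by
    nth_rewrite 1 [← Real.exp_log hκ]
    rw [← Real.exp_add]
    exact Real.exp_le_exp.2 (by linarith)
  have := Real.exp_pos (ζ t)
  have := Real.exp_pos (θ i)
  unfold q
  constructor
  · rw [div_le_div_iff₀ (by positivity) (by positivity)]; linarith
  · rw [div_le_div_iff₀ (by positivity) (by positivity)]; linarith

/-- Lower bound for the probability that two independent responses disagree. -/
lemma discordance_ge {κ a b : ℝ} (hκ : 1 ≤ κ) (ha : 1 / (1 + κ) ≤ a ∧ a ≤ κ / (1 + κ))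
    (hb : 1 / (1 + κ) ≤ b ∧ b ≤ κ / (1 + κ)) : 1 / (2 * κ) ≤ a + b - 2 * (a * b) := by
  set c := 1 / (1 + κ) with hc
  have hc1 : κ / (1 + κ) = 1 - c := by rw [hc]; field_simp; ring
  rw [hc1] at ha hb
  have hcκ : c * (1 + κ) = 1 := by rw [hc]; field_simp
  have hc0 : 0 < c := by positivity
  have hc2 : c ≤ 1 / 2 := by nlinarith
  have hmain : 2 * c * (1 - c) ≤ a + b - 2 * (a * b) := by
    have e1 : 0 ≤ 1 - 2 * c := by linarith
    rcases le_total (1 / 2) a with h | h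
    · nlinarith [mul_nonneg (sub_nonneg.2 h) (sub_nonneg.2 hb.2), mul_nonneg e1 (sub_nonneg.2 ha.2)]
    · nlinarith [mul_nonneg (sub_nonneg.2 h) (sub_nonneg.2 hb.1), mul_nonneg e1 (sub_nonneg.2 ha.1)]
  refine le_trans ?_ hmain
  have hκ1 : 1 - c = κ * c := by linarith
  rw [hκ1, div_le_iff₀ (by positivity)]
  have : 1 / 2 ≤ κ * c := by linarith
  nlinarith

lemma sum_Lcount_eq (x : Fin n → Fin m → Bool) (r : Fin n → Fin m → Fin m → Bool) (i : Fin m) :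
    (∑ j, if j ≠ i then Lcount (disc x r) i j else 0) = ∑ t, userDeg (x t) (r t) i := by
  unfold Lcount userDeg disc
  rw [Finset.sum_comm]
  refine Finset.sum_congr rfl fun j _ => ?_
  by_cases h : j = i <;> simp [h]

/-- Union bound over configurations: it requires no measurability of the data. -/
lemma HasRaschLaw.measure_le {Ω : Type*} [MeasurableSpace Ω] {P : Measure Ω}
    {p : ℝ} {ζ : Fin n → ℝ} {θ : Fin m → ℝ} {A X : Ω → Fin n → Fin m → Bool}
    {R : Ω → Fin 1 → Fin n → Fin m → Fin m → Bool} (h : HasRaschLaw P p ζ θ A X R)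
    (hp0 : 0 ≤ p) (hp1 : p ≤ 1) (l c : ℝ) (i : Fin m) :
    P {ω | c ≤ l * ((∑ t, userDeg (X ω t) (R ω 0 t) i : ℕ) : ℝ)} ≤
      ENNReal.ofReal (Real.exp (-c) * ∏ t, (1 + (Real.exp l - 1) *
        ∑ y, userWeight p (q ζ θ t) y * (userDeg y.2.1 y.2.2 i : ℝ))) := by
  classical
  let T := (Fin m → Bool) × (Fin m → Bool) × (Fin m → Fin m → Bool)
  let D : (Fin n → T) → ℕ := fun f => ∑ t, userDeg (f t).2.1 (f t).2.2 i
  let fib : (Fin n → T) → Set Ω := fun f =>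
    {ω | A ω = (fun t => (f t).1) ∧ X ω = (fun t => (f t).2.1) ∧ R ω = fun _ t => (f t).2.2}
  let S : Finset (Fin n → T) := Finset.univ.filter fun f =>
    (∀ t, IsPairing (obsUser (f t).1) (f t).2.2) ∧ c ≤ l * (D f : ℝ)
  have hw : ∀ t y, 0 ≤ userWeight p (q ζ θ t) y := fun t y =>
    userWeight_nonneg hp0 hp1 (q_nonneg ζ θ t) (q_le_one ζ θ t) y
  have hsub : {ω | c ≤ l * ((∑ t, userDeg (X ω t) (R ω 0 t) i : ℕ) : ℝ)} ⊆ ⋃ f ∈ S, fib f := by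
    intro ω hω
    simp only [Set.mem_iUnion]
    refine ⟨fun t => (A ω t, X ω t, R ω 0 t), ?_, rfl, rfl, ?_⟩
    · exact Finset.mem_filter.2 ⟨Finset.mem_univ _, fun t => h.1 ω 0 t, hω⟩
    · funext k t
      rw [Subsingleton.elim k 0]
  have hfib : ∀ f ∈ S, P (fib f) ≤ ENNReal.ofReal (Real.exp (-c) *
      ∏ t, (userWeight p (q ζ θ t) (f t) * Real.exp (l * userDeg (f t).2.1 (f t).2.2 i))) := by
    intro f hf
    obtain ⟨-, hpair, hc⟩ := Finset.mem_filter.1 hf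
    have hP := h.2 (fun t => (f t).1) (fun t => (f t).2.1) (fun _ t => (f t).2.2)
      (fun _ t => hpair t)
    refine hP.trans_le (ENNReal.ofReal_le_ofReal ?_)
    have hprod : (∏ t, ∏ i, if (f t).1 i then p else 1 - p) *
          (∏ t, ∏ i, if (f t).2.1 i then q ζ θ t i else 1 - q ζ θ t i) *
          (∏ _k : Fin 1, ∏ t, ((pairingCount (obs (fun t => (f t).1) t) : ℝ))⁻¹) =
        ∏ t, userWeight p (q ζ θ t) (f t) := by
      rw [Fin.prod_univ_one, ← Finset.prod_mul_distrib, ← Finset.prod_mul_distrib]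
      refine Finset.prod_congr rfl fun t _ => ?_
      rw [userWeight, if_pos (hpair t)]
      rfl
    rw [hprod, Finset.prod_mul_distrib, ← Real.exp_sum, ← Finset.mul_sum, ← Nat.cast_sum,
      mul_left_comm, ← Real.exp_add]
    refine le_mul_of_one_le_right (Finset.prod_nonneg fun t _ => hw t _) (Real.one_le_exp ?_)
    change 0 ≤ -c + l * (D f : ℝ)
    linarith
  have hnn : ∀ f : Fin n → T, 0 ≤ Real.exp (-c) *
      ∏ t, (userWeight p (q ζ θ t) (f t) * Real.exp (l * userDeg (f t).2.1 (f t).2.2 i)) :=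
    fun f => mul_nonneg (Real.exp_pos _).le
      (Finset.prod_nonneg fun t _ => mul_nonneg (hw t _) (Real.exp_pos _).le)
  calc _ ≤ P (⋃ f ∈ S, fib f) := measure_mono hsub
    _ ≤ ∑ f ∈ S, P (fib f) := measure_biUnion_finset_le _ _
    _ ≤ ∑ f ∈ S, ENNReal.ofReal (Real.exp (-c) *
          ∏ t, (userWeight p (q ζ θ t) (f t) * Real.exp (l * userDeg (f t).2.1 (f t).2.2 i))) :=
        Finset.sum_le_sum hfib
    _ = ENNReal.ofReal (∑ f ∈ S, Real.exp (-c) *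
          ∏ t, (userWeight p (q ζ θ t) (f t) * Real.exp (l * userDeg (f t).2.1 (f t).2.2 i))) :=
        (ENNReal.ofReal_sum_of_nonneg fun f _ => hnn f).symm
    _ ≤ _ := by
        refine ENNReal.ofReal_le_ofReal ?_
        refine (Finset.sum_le_sum_of_subset_of_nonneg (Finset.subset_univ S)
          fun f _ _ => hnn f).trans_eq ?_
        rw [← Finset.mul_sum]
        congr 1
        simp only [← sum_userWeight_exp]
        rw [Finset.prod_univ_sum, Fintype.piFinset_univ]

/-- Upper tail of the degree of an item. -/
lemma HasRaschLaw.measure_deg_gt {Ω : Type*} [MeasurableSpace Ω] {P : Measure Ω}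
    {p : ℝ} {ζ : Fin n → ℝ} {θ : Fin m → ℝ} {A X : Ω → Fin n → Fin m → Bool}
    {R : Ω → Fin 1 → Fin n → Fin m → Fin m → Bool} (h : HasRaschLaw P p ζ θ A X R)
    (hp0 : 0 ≤ p) (hp1 : p ≤ 1) (i : Fin m) :
    P {ω | 3 / 2 * (n * p) < ((∑ t, userDeg (X ω t) (R ω 0 t) i : ℕ) : ℝ)} ≤
      ENNReal.ofReal (Real.exp (-(n * p) / 16)) := by
  refine (measure_mono fun ω hω => ?_).trans ((h.measure_le hp0 hp1 (1 / 4)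
    (3 / 8 * (n * p)) i).trans (ENNReal.ofReal_le_ofReal ?_))
  · simp only [Set.mem_ofPred_eq] at hω ⊢
    linarith
  have he : Real.exp (1 / 4) - 1 ≤ 5 / 16 := by
    have := Real.abs_exp_sub_one_sub_id_le (x := 1 / 4) (by norm_num [abs_le])
    have := (abs_le.1 this).2
    linarith
  have he0 : 0 ≤ Real.exp (1 / 4) - 1 := by
    linarith [Real.add_one_le_exp (1 / 4 : ℝ)]
  have hs0 : ∀ t, 0 ≤ ∑ y, userWeight p (q ζ θ t) y * (userDeg y.2.1 y.2.2 i : ℝ) := fun t =>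
    Finset.sum_nonneg fun y _ => mul_nonneg
      (userWeight_nonneg hp0 hp1 (q_nonneg ζ θ t) (q_le_one ζ θ t) y) (Nat.cast_nonneg _)
  have hprod : ∏ t, (1 + (Real.exp (1 / 4) - 1) *
      ∑ y, userWeight p (q ζ θ t) y * (userDeg y.2.1 y.2.2 i : ℝ)) ≤
      ∏ _t : Fin n, Real.exp (5 / 16 * p) := by
    refine Finset.prod_le_prod (fun t _ => ?_) fun t _ => ?_
    · have := mul_nonneg he0 (hs0 t)
      linarith
    · have h1 := sum_userWeight_deg_le hp0 hp1 (q_nonneg ζ θ t) (q_le_one ζ θ t) i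
      have h2 := mul_le_mul he h1 (hs0 t) (by norm_num)
      linarith [Real.add_one_le_exp (5 / 16 * p)]
  refine (mul_le_mul_of_nonneg_left hprod (Real.exp_pos _).le).trans_eq ?_
  rw [Finset.prod_const, Finset.card_univ, Fintype.card_fin, ← Real.exp_nat_mul, ← Real.exp_add]
  congr 1
  ring

/-- Lower tail of the degree of an item. -/
lemma HasRaschLaw.measure_deg_lt {Ω : Type*} [MeasurableSpace Ω] {P : Measure Ω}
    {p κ : ℝ} {ζ : Fin n → ℝ} {θ : Fin m → ℝ} {A X : Ω → Fin n → Fin m → Bool}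
    {R : Ω → Fin 1 → Fin n → Fin m → Fin m → Bool} (h : HasRaschLaw P p ζ θ A X R)
    (hp0 : 0 ≤ p) (hp1 : p ≤ 1) (hκ : 1 ≤ κ) (hζθ : ∀ t i, |ζ t - θ i| ≤ Real.log κ)
    (hmp : 2 ≤ (m : ℝ) * p) (i : Fin m) :
    P {ω | ((∑ t, userDeg (X ω t) (R ω 0 t) i : ℕ) : ℝ) < n * p / (24 * κ)} ≤
      ENNReal.ofReal (Real.exp (-(n * p) / (24 * κ))) := by
  refine (measure_mono fun ω hω => ?_).trans ((h.measure_le hp0 hp1 (-1)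
    (-(n * p / (24 * κ))) i).trans (ENNReal.ofReal_le_ofReal ?_))
  · simp only [Set.mem_ofPred_eq] at hω ⊢
    linarith
  have he : Real.exp (-1) ≤ 1 / 2 := by
    rw [Real.exp_neg, one_div]
    exact inv_anti₀ (by norm_num) (by linarith [Real.add_one_le_exp (1 : ℝ)])
  have he0 := Real.exp_pos (-1)
  have hpow : (1 - p) ^ (m - 1) ≤ 1 / 2 := by
    refine le_trans ?_ he
    have h1 : 1 - p ≤ Real.exp (-p) := by linarith [Real.add_one_le_exp (-p)]
    refine (pow_le_pow_left₀ (by linarith) h1 _).trans ?_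
    rw [← Real.exp_nat_mul]
    refine Real.exp_le_exp.2 ?_
    have hm : 1 ≤ m := Nat.one_le_iff_ne_zero.2 (by rintro rfl; norm_num at hmp)
    push_cast [Nat.cast_sub hm]
    nlinarith
  have hs : ∀ t, p / (6 * κ) ≤ ∑ y, userWeight p (q ζ θ t) y * (userDeg y.2.1 y.2.2 i : ℝ) := by
    intro t
    have h1 := le_sum_userWeight_deg (u := q ζ θ t) hp0 hp1 (δ := 1 / (2 * κ)) (by positivity)
      (fun a b _ => discordance_ge hκ (q_mem_of_abs_le (by linarith) (hζθ t a))
        (q_mem_of_abs_le (by linarith) (hζθ t b))) i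
    refine le_trans ?_ h1
    have h2 : p * (1 / 2) ≤ p * (1 - (1 - p) ^ (m - 1)) :=
      mul_le_mul_of_nonneg_left (by linarith) hp0
    refine le_trans (le_of_eq ?_) (mul_le_mul_of_nonneg_left h2 (by positivity))
    field_simp
    ring
  have hprod : ∏ t, (1 + (Real.exp (-1) - 1) *
      ∑ y, userWeight p (q ζ θ t) y * (userDeg y.2.1 y.2.2 i : ℝ)) ≤
      ∏ _t : Fin n, Real.exp (-(p / (12 * κ))) := by
    refine Finset.prod_le_prod (fun t _ => ?_) fun t _ => ?_
    · have := sum_userWeight_deg_le hp0 hp1 (q_nonneg ζ θ t) (q_le_one ζ θ t) i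
      nlinarith
    · have h0 : 0 ≤ p / (6 * κ) := by positivity
      have h1 : (1 / 2) * (p / (6 * κ)) ≤ (1 - Real.exp (-1)) *
          ∑ y, userWeight p (q ζ θ t) y * (userDeg y.2.1 y.2.2 i : ℝ) :=
        mul_le_mul (by linarith) (hs t) h0 (by linarith)
      have h2 : (1 / 2) * (p / (6 * κ)) = p / (12 * κ) := by field_simp; ring
      linarith [Real.add_one_le_exp (-(p / (12 * κ)))]
  refine (mul_le_mul_of_nonneg_left hprod (Real.exp_pos _).le).trans_eq ?_
  rw [Finset.prod_const, Finset.card_univ, Fintype.card_fin, ← Real.exp_nat_mul, ← Real.exp_add]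
  congr 1
  field_simp
  ring

end Chernoff

end RaschRP

open RaschRP in
/-- **Lemma A.2 (Degree bounds in the induced item-item graph `G_Y`).**
If `np ≥ C κ₂² log n`, `mp ≥ 2` and `m ≤ n^α`, then with probability at least `1 − 2n^{−10}`
every item `i` has weighted degree `d_i = Σ_{j≠i} L_{ij}` in `G_Y` satisfying
`np/(24κ₂) ≤ d_i ≤ (3/2)np`. -/
theorem stmt_10 (α : ℝ) (hα : 0 < α) :
    ∃ C : ℝ, 0 < C ∧
      ∀ (n m : ℕ) (p κ₂ : ℝ) (Ω : Type) (mΩ : MeasurableSpace Ω) (P : Measure Ω),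
        IsProbabilityMeasure P →
        ∀ (ζ : Fin n → ℝ) (θs : Fin m → ℝ) (A X : Ω → Fin n → Fin m → Bool)
          (R : Ω → Fin 1 → Fin n → Fin m → Fin m → Bool),
          0 < p → p ≤ 1 →
          1 ≤ κ₂ → (∀ t i, |ζ t - θs i| ≤ Real.log κ₂) →
          2 ≤ (m : ℝ) * p →
          C * κ₂ ^ 2 * Real.log n ≤ (n : ℝ) * p →
          (m : ℝ) ≤ (n : ℝ) ^ α →
          HasRaschLaw P p ζ θs A X R →
          ENNReal.ofReal (1 - 2 / (n : ℝ) ^ 10) ≤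
            P {ω | ∀ i : Fin m,
              (n : ℝ) * p / (24 * κ₂) ≤
                  ((∑ j, if j ≠ i then Lcount (disc (X ω) (R ω 0)) i j else 0 : ℕ) : ℝ) ∧
                ((∑ j, if j ≠ i then Lcount (disc (X ω) (R ω 0)) i j else 0 : ℕ) : ℝ) ≤
                  3 / 2 * ((n : ℝ) * p)} := by
  refine ⟨24 * (10 + α), by positivity, ?_⟩
  intro n m p κ₂ Ω mΩ P hP ζ θs A X R hp0 hp1 hκ hζθ hmp hnp hmn hlaw
  have hn : 1 ≤ n := by
    refine Nat.one_le_iff_ne_zero.2 ?_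
    rintro rfl
    rw [Nat.cast_zero, Real.zero_rpow hα.ne'] at hmn
    nlinarith
  have hn0 : (0 : ℝ) < n := by exact_mod_cast hn
  have hlog : 0 ≤ Real.log n := Real.log_nonneg (by exact_mod_cast hn)
  have hκ0 : 0 < κ₂ := by linarith
  have hrate : (10 + α) * Real.log n ≤ n * p / (24 * κ₂) := by
    rw [le_div_iff₀ (by positivity)]
    refine le_trans ?_ hnp
    have h1 : 0 ≤ (10 + α) * Real.log n := by positivity
    nlinarith [mul_nonneg h1 (mul_nonneg hκ0.le (sub_nonneg.2 hκ))]
  have hrate' : n * p / (24 * κ₂) ≤ n * p / 16 :=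
    div_le_div_of_nonneg_left (by positivity) (by norm_num) (by linarith)
  set bad : Fin m → Set Ω := fun i =>
    {ω | ((∑ t, userDeg (X ω t) (R ω 0 t) i : ℕ) : ℝ) < n * p / (24 * κ₂)} ∪
      {ω | 3 / 2 * (n * p) < ((∑ t, userDeg (X ω t) (R ω 0 t) i : ℕ) : ℝ)} with hbad
  set good : Set Ω := {ω | ∀ i : Fin m,
      (n : ℝ) * p / (24 * κ₂) ≤
          ((∑ j, if j ≠ i then Lcount (disc (X ω) (R ω 0)) i j else 0 : ℕ) : ℝ) ∧
        ((∑ j, if j ≠ i then Lcount (disc (X ω) (R ω 0)) i j else 0 : ℕ) : ℝ) ≤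
          3 / 2 * ((n : ℝ) * p)} with hgood
  have hcover : Set.univ ⊆ good ∪ ⋃ i, bad i := by
    intro ω _
    by_cases hω : ω ∈ good
    · exact Or.inl hω
    · refine Or.inr ?_
      simp only [hgood, sum_Lcount_eq, Set.mem_ofPred_eq, not_forall, not_and_or, not_le] at hω
      obtain ⟨i, hi⟩ := hω
      exact Set.mem_iUnion.2 ⟨i, hi⟩
  have hbadi : ∀ i, P (bad i) ≤ ENNReal.ofReal (2 * Real.exp (-((10 + α) * Real.log n))) := by
    intro i
    refine (measure_union_le _ _).trans ?_
    rw [two_mul, ENNReal.ofReal_add (Real.exp_pos _).le (Real.exp_pos _).le]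
    refine add_le_add ((hlaw.measure_deg_lt hp0.le hp1 hκ hζθ hmp i).trans ?_)
      ((hlaw.measure_deg_gt hp0.le hp1 i).trans ?_)
    · refine ENNReal.ofReal_le_ofReal (Real.exp_le_exp.2 ?_)
      rw [neg_div]
      linarith
    · refine ENNReal.ofReal_le_ofReal (Real.exp_le_exp.2 ?_)
      rw [neg_div]
      linarith
  have hunion : P (⋃ i, bad i) ≤ ENNReal.ofReal (2 / (n : ℝ) ^ 10) := by
    refine (measure_iUnion_fintype_le P bad).trans ((Finset.sum_le_sum fun i _ => hbadi i).trans ?_)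
    rw [Finset.sum_const, Finset.card_univ, Fintype.card_fin, ← ENNReal.ofReal_nsmul,
      nsmul_eq_mul]
    refine ENNReal.ofReal_le_ofReal
      ((mul_le_mul_of_nonneg_right hmn (by positivity)).trans_eq ?_)
    have h10 : (n : ℝ) ^ 10 = Real.exp (10 * Real.log n) := by
      rw [mul_comm, ← Real.rpow_def_of_pos hn0, ← Real.rpow_natCast]
      norm_num
    rw [h10, Real.rpow_def_of_pos hn0, div_eq_mul_inv, ← Real.exp_neg, mul_left_comm,
      ← Real.exp_add]
    congr 2
    ring
  have hone : (1 : ENNReal) ≤ P good + ENNReal.ofReal (2 / (n : ℝ) ^ 10) := by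
    calc (1 : ENNReal) = P Set.univ := measure_univ.symm
      _ ≤ P (good ∪ ⋃ i, bad i) := measure_mono hcover
      _ ≤ P good + P (⋃ i, bad i) := measure_union_le _ _
      _ ≤ _ := by gcongr
  rw [ENNReal.ofReal_sub _ (by positivity), ENNReal.ofReal_one]
  exact tsub_le_iff_right.2 hone
end

section
/- (Spectral bounds for the item-item Laplacians, Lemma A.3) Suppose mp ≥ 2, np ≥ C κ₂² log(n) for a sufficiently large universal constant C > 0, and m ≤ n^α for some constant α > 0. Then with probability at least 1 − 10 n^{−10}: (i) np/(4κ₂) ≤ λ_{m−1}(L_L) ≤ λ₁(L_L) ≤ 3np, and (ii) np/(16 κ₁ κ₂) ≤ λ_{m−1}(L_{Lz}) ≤ λ₁(L_{Lz}) ≤ np, where λ₁ ≥ … ≥ λ_m denote eigenvalues in decreasing order. -/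
open MeasureTheory ProbabilityTheory Matrix Finset

namespace RaschRP
section GoldenThompson
open scoped Matrix.Norms.Operator
open NormedSpace Filter Topology

theorem norm_pow_sub_pow_le {𝔸 : Type*} [NormedRing 𝔸] (x y : 𝔸) {c : ℝ} (hc : 1 ≤ c)
    (hx : ‖x‖ ≤ c) (hy : ∀ N : ℕ, ‖y ^ N‖ ≤ c ^ N) (N : ℕ) :
    ‖x ^ N - y ^ N‖ ≤ N * c ^ N * ‖x - y‖ := by
  induction N with
  | zero => simp
  | succ N ih =>
    have h : x ^ (N + 1) - y ^ (N + 1) = x * (x ^ N - y ^ N) + (x - y) * y ^ N := by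
      rw [pow_succ' x, pow_succ' y]; noncomm_ring
    have h1 : ‖x * (x ^ N - y ^ N)‖ ≤ c * (N * c ^ N * ‖x - y‖) :=
      (norm_mul_le _ _).trans (mul_le_mul hx ih (norm_nonneg _) (by linarith))
    have h2 : ‖(x - y) * y ^ N‖ ≤ ‖x - y‖ * c ^ (N + 1) :=
      (norm_mul_le _ _).trans (mul_le_mul_of_nonneg_left
        ((hy N).trans (pow_le_pow_right₀ hc (Nat.le_succ N))) (norm_nonneg _))
    rw [h]
    refine (norm_add_le _ _).trans ((add_le_add h1 h2).trans (le_of_eq ?_))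
    push_cast; ring

theorem norm_exp_le_exp_norm {𝔸 : Type*} [NormedRing 𝔸] [NormedAlgebra ℝ 𝔸] [NormOneClass 𝔸]
    [CompleteSpace 𝔸] (x : 𝔸) : ‖exp x‖ ≤ Real.exp ‖x‖ := by
  let _ : NormedAlgebra ℚ 𝔸 := NormedAlgebra.restrictScalars ℚ ℝ 𝔸
  have h1 := NormedSpace.exp_series_hasSum_exp' (𝕂 := ℝ) x
  have h2 := NormedSpace.exp_series_hasSum_exp' (𝕂 := ℝ) (‖x‖ : ℝ)
  rw [← Real.exp_eq_exp_ℝ] at h2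
  refine h1.norm_le_of_bounded h2 fun n => ?_
  rw [norm_smul, smul_eq_mul, Real.norm_of_nonneg (by positivity)]
  exact mul_le_mul_of_nonneg_left (norm_pow_le x n) (by positivity)

/-- The Lie product formula. -/
theorem tendsto_exp_mul_exp_pow {𝔸 : Type*} [NormedRing 𝔸] [NormedAlgebra ℝ 𝔸] [NormOneClass 𝔸]
    [CompleteSpace 𝔸] (a b : 𝔸) :
    Tendsto (fun N : ℕ => (exp ((N : ℝ)⁻¹ • a) * exp ((N : ℝ)⁻¹ • b)) ^ N) atTop
      (𝓝 (exp (a + b))) := by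
  let _ : NormedAlgebra ℚ 𝔸 := NormedAlgebra.restrictScalars ℚ ℝ 𝔸
  set f : ℝ → 𝔸 := fun u => exp (u • a) * exp (u • b) - exp (u • (a + b)) with hf
  have hd : HasDerivAt f 0 0 := by
    have h1 := hasDerivAt_exp_smul_const (𝕂 := ℝ) a 0
    have h2 := hasDerivAt_exp_smul_const (𝕂 := ℝ) b 0
    have h3 := hasDerivAt_exp_smul_const (𝕂 := ℝ) (a + b) 0
    have := (h1.mul h2).sub h3
    have e : exp ((0 : ℝ) • a) * a * exp ((0 : ℝ) • b) + exp ((0 : ℝ) • a) * (exp ((0 : ℝ) • b) * b)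
        - exp ((0 : ℝ) • (a + b)) * (a + b) = 0 := by simp
    rw [e] at this
    exact this
  have h0 : f 0 = 0 := by simp [hf]
  have hlim : Tendsto (fun N : ℕ => (N : ℝ) * ‖f ((N : ℝ)⁻¹)‖) atTop (𝓝 0) := by
    have ho := (hasDerivAt_iff_isLittleO_nhds_zero.mp hd)
    simp only [zero_add, h0, smul_zero, sub_zero] at ho
    have ht : Tendsto (fun N : ℕ => ((N : ℝ)⁻¹)) atTop (𝓝 0) := tendsto_inv_atTop_nhds_zero_nat
    have h4 := (ho.comp_tendsto ht).norm_left.tendsto_div_nhds_zero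
    refine h4.congr fun N => ?_
    simp [Function.comp, div_eq_mul_inv, mul_comm]
  rw [tendsto_iff_norm_sub_tendsto_zero]
  have hlim2 := hlim.mul_const (Real.exp (‖a‖ + ‖b‖))
  rw [zero_mul] at hlim2
  refine squeeze_zero' (Eventually.of_forall fun _ => norm_nonneg _) ?_ hlim2
  filter_upwards [eventually_gt_atTop 0] with N hN
  have hN' : (0 : ℝ) < N := by exact_mod_cast hN
  have hpow : exp ((N : ℝ)⁻¹ • (a + b)) ^ N = exp (a + b) := by
    rw [← NormedSpace.exp_nsmul, ← Nat.cast_smul_eq_nsmul ℝ, smul_smul,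
      mul_inv_cancel₀ hN'.ne', one_smul]
  set c := Real.exp ((N : ℝ)⁻¹ * (‖a‖ + ‖b‖)) with hcdef
  have hc : c ^ N = Real.exp (‖a‖ + ‖b‖) := by
    rw [hcdef, ← Real.exp_nat_mul, ← mul_assoc, mul_inv_cancel₀ hN'.ne', one_mul]
  have hns : ∀ z : 𝔸, ‖(N : ℝ)⁻¹ • z‖ = (N : ℝ)⁻¹ * ‖z‖ := fun z => by
    rw [norm_smul, Real.norm_of_nonneg (by positivity)]
  have := norm_pow_sub_pow_le (exp ((N : ℝ)⁻¹ • a) * exp ((N : ℝ)⁻¹ • b))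
    (exp ((N : ℝ)⁻¹ • (a + b))) (c := c) (Real.one_le_exp (by positivity)) ?_ ?_ N
  · rw [hpow, hc] at this
    refine this.trans (le_of_eq ?_)
    simp only [hf]; ring
  · refine (norm_mul_le _ _).trans ?_
    rw [hcdef, mul_add, Real.exp_add]
    exact mul_le_mul ((norm_exp_le_exp_norm _).trans_eq (by rw [hns]))
      ((norm_exp_le_exp_norm _).trans_eq (by rw [hns])) (norm_nonneg _) (Real.exp_pos _).le
  · intro k
    refine (norm_pow_le _ k).trans (pow_le_pow_left₀ (norm_nonneg _) ?_ k)
    refine (norm_exp_le_exp_norm _).trans (Real.exp_le_exp.mpr ?_)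
    rw [hns]
    exact mul_le_mul_of_nonneg_left (norm_add_le _ _) (by positivity)

variable {ι : Type*} [Fintype ι]

theorem trace_mul_sq_le (A B : Matrix ι ι ℝ) :
    (A * B).trace ^ 2 ≤ (A * Aᵀ).trace * (B * Bᵀ).trace := by
  have key := Finset.sum_mul_sq_le_sq_mul_sq (Finset.univ : Finset (ι × ι))
    (fun x => A x.1 x.2) (fun x => B x.2 x.1)
  simp only [Fintype.sum_prod_type] at key
  simp only [Matrix.trace, Matrix.diag, Matrix.mul_apply, Matrix.transpose_apply, ← pow_two]
  rw [Finset.sum_comm (f := fun x y => B x y ^ 2)]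
  exact key

theorem trace_mul_transpose_nonneg (A : Matrix ι ι ℝ) : 0 ≤ (A * Aᵀ).trace := by
  simp only [Matrix.trace, Matrix.diag, Matrix.mul_apply, Matrix.transpose_apply]
  exact Finset.sum_nonneg fun i _ => Finset.sum_nonneg fun j _ => mul_self_nonneg _

variable [DecidableEq ι]

theorem trace_mul_pow_comm (A B : Matrix ι ι ℝ) (k : ℕ) :
    ((A * B) ^ k).trace = ((B * A) ^ k).trace := by
  cases k with
  | zero => simp
  | succ k => rw [pow_succ, ← mul_assoc, mul_pow_mul, Matrix.trace_mul_comm, ← mul_assoc, ← pow_succ']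

theorem trace_mul_transpose_pow_nonneg (A : Matrix ι ι ℝ) (k : ℕ) :
    0 ≤ ((A * Aᵀ) ^ (2 ^ k)).trace := by
  cases k with
  | zero => simpa using trace_mul_transpose_nonneg A
  | succ k =>
    have h : (A * Aᵀ) ^ (2 ^ (k + 1)) = (A * Aᵀ) ^ (2 ^ k) * ((A * Aᵀ) ^ (2 ^ k))ᵀ := by
      rw [Matrix.transpose_pow, Matrix.transpose_mul, Matrix.transpose_transpose, ← pow_add]
      congr 1; ring
    rw [h]
    exact trace_mul_transpose_nonneg _

theorem trace_mul_pow_sq_le (k : ℕ) : ∀ A B : Matrix ι ι ℝ,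
    ((A * B) ^ (2 ^ k)).trace ^ 2 ≤
      ((A * Aᵀ) ^ (2 ^ k)).trace * ((B * Bᵀ) ^ (2 ^ k)).trace := by
  induction k with
  | zero => intro A B; simpa using trace_mul_sq_le A B
  | succ k ih =>
    intro A B
    have h1 := ih (A * B) (A * B)
    have h2 := ih (Aᵀ * A) (B * Bᵀ)
    have e0 : ∀ C : Matrix ι ι ℝ, (C * C) ^ (2 ^ k) = C ^ (2 ^ (k + 1)) := fun C => by
      rw [← pow_two, ← pow_mul]; congr 1; ring
    have e1 : ((A * B * (A * B)ᵀ) ^ (2 ^ k)).trace = ((Aᵀ * A * (B * Bᵀ)) ^ (2 ^ k)).trace := by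
      rw [Matrix.transpose_mul, show A * B * (Bᵀ * Aᵀ) = (A * B * Bᵀ) * Aᵀ by noncomm_ring,
        trace_mul_pow_comm]
      congr 2; noncomm_ring
    have e2 : ((Aᵀ * A * (Aᵀ * A)ᵀ) ^ (2 ^ k)).trace = ((A * Aᵀ) ^ (2 ^ (k + 1))).trace := by
      rw [Matrix.transpose_mul, Matrix.transpose_transpose, e0, trace_mul_pow_comm]
    have e3 : ((B * Bᵀ * (B * Bᵀ)ᵀ) ^ (2 ^ k)).trace = ((B * Bᵀ) ^ (2 ^ (k + 1))).trace := by
      rw [Matrix.transpose_mul, Matrix.transpose_transpose, e0]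
    rw [e0, e1] at h1
    rw [e2, e3] at h2
    nlinarith

theorem trace_pow_le_trace_mul_transpose_pow (C : Matrix ι ι ℝ) (k : ℕ) :
    (C ^ (2 ^ (k + 1))).trace ≤ ((C * Cᵀ) ^ (2 ^ k)).trace := by
  have h := trace_mul_pow_sq_le k C C
  have e0 : (C * C) ^ (2 ^ k) = C ^ (2 ^ (k + 1)) := by
    rw [← pow_two, ← pow_mul]; congr 1; ring
  rw [e0, ← pow_two] at h
  exact le_of_abs_le (abs_le_of_sq_le_sq h (trace_mul_transpose_pow_nonneg C k))

theorem trace_mul_pow_le (k : ℕ) : ∀ {X Y : Matrix ι ι ℝ}, Xᵀ = X → Yᵀ = Y →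
    ((X * Y) ^ (2 ^ k)).trace ≤ (X ^ (2 ^ k) * Y ^ (2 ^ k)).trace := by
  induction k with
  | zero => intro X Y _ _; simp
  | succ k ih =>
    intro X Y hX hY
    refine (trace_pow_le_trace_mul_transpose_pow (X * Y) k).trans ?_
    have e : ((X * Y * (X * Y)ᵀ) ^ (2 ^ k)).trace = ((X ^ 2 * Y ^ 2) ^ (2 ^ k)).trace := by
      rw [Matrix.transpose_mul, hX, hY, show X * Y * (Y * X) = (X * Y * Y) * X by noncomm_ring,
        trace_mul_pow_comm]
      congr 2; noncomm_ring
    rw [e]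
    refine (ih (by rw [Matrix.transpose_pow, hX]) (by rw [Matrix.transpose_pow, hY])).trans_eq ?_
    rw [← pow_mul, ← pow_mul, pow_succ']

/-- The Golden–Thompson inequality for real symmetric matrices. -/
theorem trace_exp_add_le [Nonempty ι] {A B : Matrix ι ι ℝ} (hA : Aᵀ = A) (hB : Bᵀ = B) :
    (exp (A + B)).trace ≤ (exp A * exp B).trace := by
  have hN : Tendsto (fun k : ℕ => 2 ^ k) atTop (atTop : Filter ℕ) :=
    tendsto_pow_atTop_atTop_of_one_lt one_lt_two
  have h := (tendsto_exp_mul_exp_pow A B).comp hN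
  have hc : Continuous (Matrix.trace : Matrix ι ι ℝ → ℝ) := continuous_id.matrix_trace
  refine le_of_tendsto' ((hc.tendsto _).comp h) fun k => ?_
  have hpow : ∀ C : Matrix ι ι ℝ, exp ((((2 ^ k : ℕ) : ℝ))⁻¹ • C) ^ (2 ^ k) = exp C := fun C => by
    rw [← Matrix.exp_nsmul, ← Nat.cast_smul_eq_nsmul ℝ, smul_smul,
      mul_inv_cancel₀ (by positivity), one_smul]
  have hs : ∀ {C : Matrix ι ι ℝ}, Cᵀ = C →
      (exp ((((2 ^ k : ℕ) : ℝ))⁻¹ • C))ᵀ = exp ((((2 ^ k : ℕ) : ℝ))⁻¹ • C) := fun {C} hC => by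
    rw [← Matrix.exp_transpose, Matrix.transpose_smul, hC]
  have := trace_mul_pow_le k (hs hA) (hs hB)
  rw [hpow, hpow] at this
  exact this

end GoldenThompson

section TraceMGF
open scoped Matrix.Norms.Operator
open NormedSpace

variable {ι : Type*} [Fintype ι] [DecidableEq ι]

theorem exists_diagonalization_exp {K : Matrix ι ι ℝ} (hK : Kᵀ = K) :
    ∃ (U : Matrix ι ι ℝ) (d : ι → ℝ), Uᵀ * U = 1 ∧ U * Uᵀ = 1 ∧ K = U * diagonal d * Uᵀ ∧
      exp K = U * diagonal (fun i => Real.exp (d i)) * Uᵀ := by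
  have hH : K.IsHermitian := by rw [Matrix.IsHermitian, conjTranspose_eq_transpose_of_trivial, hK]
  set U : Matrix ι ι ℝ := (hH.eigenvectorUnitary : Matrix ι ι ℝ) with hU
  have h1 : Uᵀ * U = 1 := by
    have := Unitary.coe_star_mul_self hH.eigenvectorUnitary
    rwa [star_eq_conjTranspose, conjTranspose_eq_transpose_of_trivial] at this
  have h2 : U * Uᵀ = 1 := mul_eq_one_comm.mp h1
  have h3 : K = U * diagonal hH.eigenvalues * Uᵀ := by
    conv_lhs => rw [hH.spectral_theorem, Unitary.conjStarAlgAut_apply]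
    rw [star_eq_conjTranspose, conjTranspose_eq_transpose_of_trivial]
    rfl
  refine ⟨U, hH.eigenvalues, h1, h2, h3, ?_⟩
  have hinv : U⁻¹ = Uᵀ := Matrix.inv_eq_right_inv h2
  have hunit : IsUnit U := IsUnit.of_mul_eq_one _ h2
  conv_lhs => rw [h3, ← hinv, Matrix.exp_conj _ _ hunit, Matrix.exp_diagonal, hinv]
  congr 3
  ext i
  rw [Pi.coe_exp, Real.exp_eq_exp_ℝ]

theorem dotProduct_conj_diagonal (U : Matrix ι ι ℝ) (d v : ι → ℝ) :
    v ⬝ᵥ ((U * diagonal d * Uᵀ) *ᵥ v) = ∑ i, d i * (Uᵀ *ᵥ v) i ^ 2 := by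
  rw [← Matrix.mulVec_mulVec, ← Matrix.mulVec_mulVec, Matrix.dotProduct_mulVec,
    ← Matrix.mulVec_transpose]
  simp only [dotProduct, Matrix.mulVec_diagonal]
  exact Finset.sum_congr rfl fun i _ => by ring

theorem sum_transpose_mulVec_sq {U : Matrix ι ι ℝ} (hU : U * Uᵀ = 1) (v : ι → ℝ) :
    ∑ i, (Uᵀ *ᵥ v) i ^ 2 = v ⬝ᵥ v := by
  have := dotProduct_conj_diagonal U 1 v
  simp only [Matrix.diagonal_one', Pi.one_apply, one_mul, mul_one, hU, Matrix.one_mulVec] at this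
  exact this.symm

/-- Jensen's inequality for the matrix exponential, bounded by the trace. -/
theorem exp_dotProduct_le_trace_exp {K : Matrix ι ι ℝ} (hK : Kᵀ = K) {v : ι → ℝ}
    (hv : v ⬝ᵥ v = 1) : Real.exp (v ⬝ᵥ (K *ᵥ v)) ≤ (exp K).trace := by
  obtain ⟨U, d, h1, h2, h3, h4⟩ := exists_diagonalization_exp hK
  have hw := sum_transpose_mulVec_sq h2 v
  rw [hv] at hw
  have htr : (exp K).trace = ∑ i, Real.exp (d i) := by
    rw [h4, Matrix.trace_mul_comm, ← mul_assoc, h1, one_mul, Matrix.trace_diagonal]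
  rw [htr, h3, dotProduct_conj_diagonal]
  have hj := convexOn_exp.map_sum_le (t := Finset.univ) (w := fun i => (Uᵀ *ᵥ v) i ^ 2) (p := d)
    (fun i _ => sq_nonneg _) hw (fun i _ => Set.mem_univ _)
  simp only [smul_eq_mul] at hj
  calc Real.exp (∑ i, d i * (Uᵀ *ᵥ v) i ^ 2)
      = Real.exp (∑ i, (Uᵀ *ᵥ v) i ^ 2 * d i) := by simp_rw [mul_comm]
    _ ≤ ∑ i, (Uᵀ *ᵥ v) i ^ 2 * Real.exp (d i) := hj
    _ ≤ ∑ i, Real.exp (d i) := by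
        refine Finset.sum_le_sum fun i _ => ?_
        refine mul_le_of_le_one_left (Real.exp_pos _).le ?_
        rw [← hw]
        exact Finset.single_le_sum (f := fun i => (Uᵀ *ᵥ v) i ^ 2) (fun i _ => sq_nonneg _)
          (Finset.mem_univ i)

theorem exp_le_of_mem {x : ℝ} (h1 : -(1 / 4) ≤ x) (h2 : x ≤ 0) :
    Real.exp x ≤ 1 + 7 / 8 * x := by
  have h3 : 1 - x + x ^ 2 / 2 ≤ Real.exp (-x) := by
    have := Real.quadratic_le_exp_of_nonneg (x := -x) (by linarith)
    linarith [this, neg_sq x]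
  have h4 : Real.exp x * Real.exp (-x) = 1 := by rw [← Real.exp_add]; simp
  have h5 : 1 ≤ (1 + 7 / 8 * x) * (1 - x + x ^ 2 / 2) := by
    nlinarith [mul_nonneg (neg_nonneg.mpr h2) (sub_nonneg.mpr h1), sq_nonneg x,
      mul_nonneg (neg_nonneg.mpr h2) (mul_nonneg (neg_nonneg.mpr h2) (sub_nonneg.mpr h1))]
  have h6 : 0 ≤ 1 + 7 / 8 * x := by linarith
  by_contra! hlt
  nlinarith [Real.exp_pos (-x)]

theorem dotProduct_exp_mulVec_le {K : Matrix ι ι ℝ} (hK : Kᵀ = K)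
    (hlow : ∀ v : ι → ℝ, -(1 / 4) * (v ⬝ᵥ v) ≤ v ⬝ᵥ (K *ᵥ v))
    (hup : ∀ v : ι → ℝ, v ⬝ᵥ (K *ᵥ v) ≤ 0) (v : ι → ℝ) :
    v ⬝ᵥ (exp K *ᵥ v) ≤ v ⬝ᵥ v + 7 / 8 * (v ⬝ᵥ (K *ᵥ v)) := by
  obtain ⟨U, d, h1, h2, h3, h4⟩ := exists_diagonalization_exp hK
  have hd : ∀ i, -(1 / 4) ≤ d i ∧ d i ≤ 0 := fun i => by
    have hu : Uᵀ *ᵥ (U *ᵥ Pi.single i 1) = Pi.single i 1 := by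
      rw [Matrix.mulVec_mulVec, h1, Matrix.one_mulVec]
    have e1 : (U *ᵥ Pi.single i 1) ⬝ᵥ (U *ᵥ Pi.single i 1) = 1 := by
      rw [← sum_transpose_mulVec_sq h2, hu]
      simp [Pi.single_apply]
    have e2 : (U *ᵥ Pi.single i 1) ⬝ᵥ (K *ᵥ (U *ᵥ Pi.single i 1)) = d i := by
      conv_lhs => rw [h3]
      rw [dotProduct_conj_diagonal, hu]
      simp [Pi.single_apply]
    have := hlow (U *ᵥ Pi.single i 1)
    rw [e1, e2] at this
    exact ⟨by linarith, e2 ▸ hup _⟩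
  rw [h4, dotProduct_conj_diagonal, ← sum_transpose_mulVec_sq h2]
  conv_rhs => rw [h3]
  rw [dotProduct_conj_diagonal, Finset.mul_sum, ← Finset.sum_add_distrib]
  refine Finset.sum_le_sum fun i _ => ?_
  have := mul_le_mul_of_nonneg_right (exp_le_of_mem (hd i).1 (hd i).2) (sq_nonneg ((Uᵀ *ᵥ v) i))
  linarith

theorem trace_exp_nonneg {H : Matrix ι ι ℝ} (hH : Hᵀ = H) : 0 ≤ (exp H).trace := by
  obtain ⟨U, d, h1, h2, h3, h4⟩ := exists_diagonalization_exp hH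
  rw [h4, Matrix.trace_mul_comm, ← mul_assoc, h1, one_mul, Matrix.trace_diagonal]
  exact Finset.sum_nonneg fun i _ => (Real.exp_pos _).le

theorem trace_exp_mul_le {H E : Matrix ι ι ℝ} (hH : Hᵀ = H) {c : ℝ}
    (hE : ∀ v : ι → ℝ, v ⬝ᵥ (E *ᵥ v) ≤ c * (v ⬝ᵥ v)) :
    (exp H * E).trace ≤ c * (exp H).trace := by
  obtain ⟨U, d, h1, h2, h3, h4⟩ := exists_diagonalization_exp hH
  have htr : (exp H).trace = ∑ i, Real.exp (d i) := by
    rw [h4, Matrix.trace_mul_comm, ← mul_assoc, h1, one_mul, Matrix.trace_diagonal]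
  have htr2 : (exp H * E).trace =
      ∑ i, Real.exp (d i) * ((U *ᵥ Pi.single i 1) ⬝ᵥ (E *ᵥ (U *ᵥ Pi.single i 1))) := by
    rw [h4, show U * diagonal (fun i => Real.exp (d i)) * Uᵀ * E =
      U * (diagonal (fun i => Real.exp (d i)) * (Uᵀ * E)) by noncomm_ring, Matrix.trace_mul_comm,
      mul_assoc]
    simp only [Matrix.trace, Matrix.diag, Matrix.diagonal_mul]
    refine Finset.sum_congr rfl fun i _ => ?_
    congr 1
    rw [Matrix.mulVec_mulVec]
    simp only [Matrix.mul_apply, dotProduct, Matrix.mulVec_single_one, Matrix.col_apply,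
      Matrix.transpose_apply, Finset.mul_sum, Finset.sum_mul]
    rw [Finset.sum_comm]
    exact Finset.sum_congr rfl fun j _ => Finset.sum_congr rfl fun k _ => by ring
  rw [htr, htr2, Finset.mul_sum]
  refine Finset.sum_le_sum fun i _ => ?_
  have e1 : (U *ᵥ Pi.single i 1) ⬝ᵥ (U *ᵥ Pi.single i 1) = 1 := by
    rw [← sum_transpose_mulVec_sq h2, Matrix.mulVec_mulVec, h1, Matrix.one_mulVec]
    simp [Pi.single_apply]
  have := hE (U *ᵥ Pi.single i 1)
  rw [e1, mul_one] at this
  rw [mul_comm c]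
  exact mul_le_mul_of_nonneg_left this (Real.exp_pos _).le

/-- The trace moment generating function of a sum of independent symmetric matrices. -/
theorem sum_prod_mul_trace_exp_le [Nonempty ι] {V : Type*} [Fintype V]
    (M : V → Matrix ι ι ℝ) (hM : ∀ u, (M u)ᵀ = M u) {c : ℝ} (hc : 0 ≤ c) (n : ℕ) :
    ∀ (w : Fin n → V → ℝ) (_ : ∀ t u, 0 ≤ w t u)
      (_ : ∀ t, ∀ v : ι → ℝ, ∑ u, w t u * (v ⬝ᵥ (exp (M u) *ᵥ v)) ≤ c * (v ⬝ᵥ v))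
      (H : Matrix ι ι ℝ) (_ : Hᵀ = H),
      ∑ u : Fin n → V, (∏ t, w t (u t)) * (exp (H + ∑ t, M (u t))).trace ≤
        c ^ n * (exp H).trace := by
  induction n with
  | zero => intro w _ _ H _; simp
  | succ n ih =>
    intro w hw hE H hH
    rw [← (Fin.consEquiv (fun _ => V)).sum_comp, Fintype.sum_prod_type]
    simp only [Fin.consEquiv_apply, Fin.prod_univ_succ, Fin.sum_univ_succ, Fin.cons_zero,
      Fin.cons_succ]
    calc ∑ x, ∑ y : Fin n → V, w 0 x * (∏ i : Fin n, w i.succ (y i)) *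
          (exp (H + (M x + ∑ i, M (y i)))).trace
        = ∑ x, w 0 x * ∑ y : Fin n → V, (∏ i : Fin n, w i.succ (y i)) *
          (exp (H + M x + ∑ i, M (y i))).trace := by
          refine Finset.sum_congr rfl fun x _ => ?_
          rw [Finset.mul_sum]
          refine Finset.sum_congr rfl fun y _ => ?_
          rw [mul_assoc, add_assoc]
      _ ≤ ∑ x, w 0 x * (c ^ n * (exp H * exp (M x)).trace) := by
          refine Finset.sum_le_sum fun x _ => mul_le_mul_of_nonneg_left ?_ (hw 0 x)
          refine (ih (fun i => w i.succ) (fun t u => hw _ _) (fun t => hE _) (H + M x)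
            (by rw [Matrix.transpose_add, hH, hM])).trans ?_
          exact mul_le_mul_of_nonneg_left (trace_exp_add_le hH (hM x)) (pow_nonneg hc n)
      _ = c ^ n * (exp H * ∑ x, w 0 x • exp (M x)).trace := by
          simp only [Finset.mul_sum, Matrix.trace_sum, Matrix.mul_smul, Matrix.trace_smul,
            smul_eq_mul]
          exact Finset.sum_congr rfl fun x _ => by ring
      _ ≤ c ^ n * (c * (exp H).trace) := by
          refine mul_le_mul_of_nonneg_left (trace_exp_mul_le hH fun v => ?_) (pow_nonneg hc n)
          refine le_trans (le_of_eq ?_) (hE 0 v)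
          simp only [Matrix.sum_mulVec, Matrix.smul_mulVec, dotProduct_sum, dotProduct_smul,
            smul_eq_mul]
      _ = c ^ (n + 1) * (exp H).trace := by ring

end TraceMGF

section Laplacian

variable {n m : ℕ}

/-- The Laplacian of a weighted graph. -/
noncomputable def wLap (c : Fin m → Fin m → ℝ) : Matrix (Fin m) (Fin m) ℝ :=
  ∑ ij : Fin m × Fin m,
    if ij.2 < ij.1 then
      c ij.1 ij.2 •
        Matrix.vecMulVec (Pi.single ij.1 (1 : ℝ) - Pi.single ij.2 1)
          (Pi.single ij.1 (1 : ℝ) - Pi.single ij.2 1)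
    else 0

/-- The quadratic form of `wLap`. -/
def qForm (c : Fin m → Fin m → ℝ) (v : Fin m → ℝ) : ℝ :=
  ∑ ij : Fin m × Fin m, if ij.2 < ij.1 then c ij.1 ij.2 * (v ij.1 - v ij.2) ^ 2 else 0

theorem dotProduct_wLap (c : Fin m → Fin m → ℝ) (v : Fin m → ℝ) :
    v ⬝ᵥ (wLap c *ᵥ v) = qForm c v := by
  rw [wLap, Matrix.sum_mulVec, dotProduct_sum, qForm]
  refine Finset.sum_congr rfl fun ij _ => ?_
  split_ifs
  · rw [Matrix.smul_mulVec, dotProduct_smul, Matrix.vecMulVec_mulVec, smul_eq_mul]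
    simp [dotProduct_sub, sub_dotProduct, pow_two]
  · simp

theorem wLap_transpose (c : Fin m → Fin m → ℝ) : (wLap c)ᵀ = wLap c := by
  rw [wLap, Matrix.transpose_sum]
  refine Finset.sum_congr rfl fun ij _ => ?_
  split_ifs
  · rw [Matrix.transpose_smul, Matrix.transpose_vecMulVec]
  · simp

theorem sum_lt_eq_half {f : Fin m → Fin m → ℝ} (hs : ∀ i j, f i j = f j i) (h0 : ∀ i, f i i = 0) :
    (∑ ij : Fin m × Fin m, if ij.2 < ij.1 then f ij.1 ij.2 else 0) = (∑ i, ∑ j, f i j) / 2 := by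
  have h1 : (∑ ij : Fin m × Fin m, if ij.2 < ij.1 then f ij.1 ij.2 else 0) =
      ∑ ij : Fin m × Fin m, if ij.1 < ij.2 then f ij.1 ij.2 else 0 := by
    rw [← (Equiv.prodComm (Fin m) (Fin m)).sum_comp]
    refine Finset.sum_congr rfl fun ij _ => ?_
    change (if ij.1 < ij.2 then f ij.2 ij.1 else 0) = _
    rw [hs]
  have h2 : (∑ i, ∑ j, f i j) =
      (∑ ij : Fin m × Fin m, if ij.2 < ij.1 then f ij.1 ij.2 else 0) +
      ∑ ij : Fin m × Fin m, if ij.1 < ij.2 then f ij.1 ij.2 else 0 := by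
    rw [← Finset.sum_add_distrib, ← Fintype.sum_prod_type']
    refine Finset.sum_congr rfl fun ij _ => ?_
    rcases lt_trichotomy ij.1 ij.2 with h | h | h
    · simp [h, h.le]
    · simp [h, h0]
    · simp [h, h.le]
  linarith

theorem qForm_mono {c c' : Fin m → Fin m → ℝ} (h : ∀ i j, j < i → c i j ≤ c' i j) (v : Fin m → ℝ) :
    qForm c v ≤ qForm c' v := by
  refine Finset.sum_le_sum fun ij _ => ?_
  split_ifs with hij
  · exact mul_le_mul_of_nonneg_right (h _ _ hij) (sq_nonneg _)
  · exact le_rfl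

theorem qForm_smul (a : ℝ) (c : Fin m → Fin m → ℝ) (v : Fin m → ℝ) :
    qForm (fun i j => a * c i j) v = a * qForm c v := by
  rw [qForm, qForm, Finset.mul_sum]
  refine Finset.sum_congr rfl fun ij _ => ?_
  split_ifs <;> ring

theorem qForm_nonneg {c : Fin m → Fin m → ℝ} (h : ∀ i j, 0 ≤ c i j) (v : Fin m → ℝ) :
    0 ≤ qForm c v := by
  refine Finset.sum_nonneg fun ij _ => ?_
  split_ifs
  · exact mul_nonneg (h _ _) (sq_nonneg _)
  · exact le_rfl

theorem qForm_sum {κ : Type*} (s : Finset κ) (c : κ → Fin m → Fin m → ℝ) (v : Fin m → ℝ) :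
    qForm (fun i j => ∑ t ∈ s, c t i j) v = ∑ t ∈ s, qForm (c t) v := by
  simp only [qForm]
  rw [Finset.sum_comm]
  refine Finset.sum_congr rfl fun ij _ => ?_
  split_ifs
  · rw [Finset.sum_mul]
  · simp

theorem qForm_one (v : Fin m → ℝ) :
    qForm (fun _ _ => 1) v = m * (∑ i, v i ^ 2) - (∑ i, v i) ^ 2 := by
  rw [qForm]
  simp only [one_mul]
  rw [sum_lt_eq_half (f := fun i j => (v i - v j) ^ 2) (fun i j => by ring) (fun i => by ring)]
  have : ∀ i j, (v i - v j) ^ 2 = v i ^ 2 + v j ^ 2 - 2 * (v i * v j) := fun i j => by ring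
  simp only [this, Finset.sum_sub_distrib, Finset.sum_add_distrib, Finset.sum_const,
    Finset.card_univ, Fintype.card_fin, nsmul_eq_mul, ← Finset.mul_sum, ← Finset.sum_mul]
  ring

theorem qForm_le_of_row_sum_le {c : Fin m → Fin m → ℝ} (hs : ∀ i j, c i j = c j i)
    (h0 : ∀ i j, 0 ≤ c i j) {D : ℝ} (hD : ∀ i, ∑ j, c i j ≤ D) (v : Fin m → ℝ) :
    qForm c v ≤ 2 * D * ∑ i, v i ^ 2 := by
  rw [qForm, sum_lt_eq_half (f := fun i j => c i j * (v i - v j) ^ 2)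
    (fun i j => by rw [hs]; ring) (fun i => by ring)]
  have h1 : ∑ i, ∑ j, c i j * (v i - v j) ^ 2 ≤
      ∑ i, ∑ j, (2 * (c i j * v i ^ 2) + 2 * (c i j * v j ^ 2)) := by
    refine Finset.sum_le_sum fun i _ => Finset.sum_le_sum fun j _ => ?_
    nlinarith [mul_nonneg (h0 i j) (sq_nonneg (v i + v j))]
  have h2 : ∑ i, ∑ j, c i j * v i ^ 2 ≤ D * ∑ i, v i ^ 2 := by
    rw [Finset.mul_sum]
    refine Finset.sum_le_sum fun i _ => ?_
    rw [← Finset.sum_mul]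
    exact mul_le_mul_of_nonneg_right (hD i) (sq_nonneg _)
  have h3 : ∑ i, ∑ j, c i j * v j ^ 2 = ∑ i, ∑ j, c i j * v i ^ 2 := by
    rw [Finset.sum_comm]
    exact Finset.sum_congr rfl fun i _ => Finset.sum_congr rfl fun j _ => by rw [hs]
  simp only [Finset.sum_add_distrib, ← Finset.mul_sum] at h1
  rw [h3] at h1
  linarith

/-- The weights of the discordant pairs of one user. -/
def discW (x : Fin m → Bool) (r : Fin m → Fin m → Bool) (i j : Fin m) : ℝ :=
  if (r i j && (x i != x j)) = true then 1 else 0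

theorem discW_nonneg (x : Fin m → Bool) (r : Fin m → Fin m → Bool) (i j : Fin m) :
    0 ≤ discW x r i j := by
  unfold discW; split_ifs <;> norm_num

theorem discW_symm {s : Finset (Fin m)} {r : Fin m → Fin m → Bool} (hr : IsPairing s r)
    (x : Fin m → Bool) (i j : Fin m) : discW x r i j = discW x r j i := by
  unfold discW
  rw [hr.1 i j, bne_comm]

theorem discW_row_sum_le {s : Finset (Fin m)} {r : Fin m → Fin m → Bool} (hr : IsPairing s r)
    (x : Fin m → Bool) (i : Fin m) : ∑ j, discW x r i j ≤ if i ∈ s then 1 else 0 := by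
  have hle : ∀ j, discW x r i j ≤ if r i j = true then 1 else 0 := fun j => by
    unfold discW
    cases r i j <;> simp
    split_ifs <;> norm_num
  refine (Finset.sum_le_sum fun j _ => hle j).trans ?_
  by_cases hex : ∃ k, r i k = true
  · obtain ⟨k, hk⟩ := hex
    rw [if_pos (hr.2.2.1 i k hk).1, Finset.sum_eq_single k]
    · simp [hk]
    · intro j _ hj
      rw [if_neg]
      exact fun h => hj (hr.2.2.2.1 i j k h hk)
    · simp
  · push Not at hex
    rw [Finset.sum_eq_zero fun j _ => if_neg (hex j)]
    split_ifs <;> norm_num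

theorem Lcount_disc (x : Fin n → Fin m → Bool) (r : Fin n → Fin m → Fin m → Bool) (i j : Fin m) :
    (Lcount (disc x r) i j : ℝ) = ∑ t, discW (x t) (r t) i j := by
  simp [Lcount, disc, discW]

theorem lapL_eq_wLap (ℓ : Fin n → Fin m → Fin m → Bool) :
    lapL ℓ = wLap fun i j => (Lcount ℓ i j : ℝ) := rfl

theorem lapLz_eq_wLap (θ : Fin m → ℝ) (ℓ : Fin n → Fin m → Fin m → Bool) :
    lapLz θ ℓ = wLap fun i j => (Lcount ℓ i j : ℝ) * z θ i j := rfl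

theorem dotProduct_lapL (x : Fin n → Fin m → Bool) (r : Fin n → Fin m → Fin m → Bool)
    (v : Fin m → ℝ) :
    v ⬝ᵥ (lapL (disc x r) *ᵥ v) = ∑ t, qForm (discW (x t) (r t)) v := by
  rw [← qForm_sum, lapL_eq_wLap, dotProduct_wLap]
  simp only [Lcount_disc]

theorem z_le_quarter (θ : Fin m → ℝ) (i j : Fin m) : z θ i j ≤ 1 / 4 := by
  have hi := Real.exp_pos (θ i)
  have hj := Real.exp_pos (θ j)
  rw [z, div_le_div_iff₀ (by positivity) (by norm_num)]
  nlinarith [sq_nonneg (Real.exp (θ i) - Real.exp (θ j))]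

theorem exp_le_mul_exp_of_abs_sub_le {a b κ : ℝ} (hκ : 1 ≤ κ) (h : |a - b| ≤ Real.log κ) :
    Real.exp a ≤ κ * Real.exp b := by
  have h1 : a ≤ Real.log κ + b := by linarith [(abs_le.mp h).2]
  calc Real.exp a ≤ Real.exp (Real.log κ + b) := Real.exp_le_exp.mpr h1
    _ = κ * Real.exp b := by rw [Real.exp_add, Real.exp_log (by linarith)]

theorem le_z {θ : Fin m → ℝ} {κ : ℝ} (hκ : 1 ≤ κ) {i j : Fin m}
    (h : |θ i - θ j| ≤ Real.log κ) : 1 / (4 * κ) ≤ z θ i j := by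
  have hi := Real.exp_pos (θ i)
  have hj := Real.exp_pos (θ j)
  have h1 := exp_le_mul_exp_of_abs_sub_le hκ h
  have h2 := exp_le_mul_exp_of_abs_sub_le hκ (abs_sub_comm (θ i) (θ j) ▸ h)
  rw [z, div_le_div_iff₀ (by positivity) (by positivity)]
  nlinarith [mul_le_mul_of_nonneg_left h1 hi.le, mul_le_mul_of_nonneg_left h2 hj.le,
    mul_le_mul_of_nonneg_right hκ (mul_pos hi hj).le]

/-- The degree bound on the Laplacian in terms of the numbers of observations per item. -/
theorem dotProduct_lapL_le {a x : Fin n → Fin m → Bool} {r : Fin n → Fin m → Fin m → Bool}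
    (hr : ∀ t, IsPairing (obs a t) (r t)) {D : ℝ}
    (hD : ∀ i, (∑ t, if a t i = true then (1 : ℝ) else 0) ≤ D) (v : Fin m → ℝ) :
    v ⬝ᵥ (lapL (disc x r) *ᵥ v) ≤ 2 * D * ∑ i, v i ^ 2 := by
  rw [lapL_eq_wLap, dotProduct_wLap]
  refine qForm_le_of_row_sum_le (fun i j => ?_) (fun i j => by positivity) (fun i => ?_) v
  · rw [Lcount_disc, Lcount_disc]
    exact Finset.sum_congr rfl fun t _ => discW_symm (hr t) _ _ _
  · simp only [Lcount_disc]
    rw [Finset.sum_comm]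
    refine (Finset.sum_le_sum fun t _ => discW_row_sum_le (hr t) (x t) i).trans ?_
    simpa [obs] using hD i

theorem dotProduct_lapLz_le (θ : Fin m → ℝ) (ℓ : Fin n → Fin m → Fin m → Bool) (v : Fin m → ℝ) :
    v ⬝ᵥ (lapLz θ ℓ *ᵥ v) ≤ 1 / 4 * (v ⬝ᵥ (lapL ℓ *ᵥ v)) := by
  rw [lapLz_eq_wLap, lapL_eq_wLap, dotProduct_wLap, dotProduct_wLap, ← qForm_smul]
  refine qForm_mono (fun i j _ => ?_) v
  rw [mul_comm]
  exact mul_le_mul_of_nonneg_right (z_le_quarter θ i j) (by positivity)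

theorem le_dotProduct_lapLz {θ : Fin m → ℝ} {κ : ℝ} (hκ : 1 ≤ κ)
    (h : ∀ i j, |θ i - θ j| ≤ Real.log κ) (ℓ : Fin n → Fin m → Fin m → Bool) (v : Fin m → ℝ) :
    1 / (4 * κ) * (v ⬝ᵥ (lapL ℓ *ᵥ v)) ≤ v ⬝ᵥ (lapLz θ ℓ *ᵥ v) := by
  rw [lapLz_eq_wLap, lapL_eq_wLap, dotProduct_wLap, dotProduct_wLap, ← qForm_smul]
  refine qForm_mono (fun i j _ => ?_) v
  rw [mul_comm]
  exact mul_le_mul_of_nonneg_left (le_z hκ (h i j)) (by positivity)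

end Laplacian

section User

variable {m : ℕ}

/-- The law of independent Bernoulli variables with success probabilities `Q`. -/
def bern (Q : Fin m → ℝ) (x : Fin m → Bool) : ℝ := ∏ i, if x i then Q i else 1 - Q i

theorem bern_nonneg {Q : Fin m → ℝ} (h0 : ∀ i, 0 ≤ Q i) (h1 : ∀ i, Q i ≤ 1) (x : Fin m → Bool) :
    0 ≤ bern Q x := by
  refine Finset.prod_nonneg fun i _ => ?_
  split_ifs
  · exact h0 i
  · linarith [h1 i]

theorem sum_bern_mul_prod (Q : Fin m → ℝ) (g : Fin m → Bool → ℝ) :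
    ∑ x, bern Q x * ∏ i, g i (x i) = ∏ i, (Q i * g i true + (1 - Q i) * g i false) := by
  have h := Finset.prod_univ_sum (fun _ : Fin m => (Finset.univ : Finset Bool))
    (fun i b => (if b then Q i else 1 - Q i) * g i b)
  simp only [Fintype.piFinset_univ, Fintype.sum_bool, if_true, Finset.prod_mul_distrib] at h
  simpa [bern] using h.symm

theorem sum_bern (Q : Fin m → ℝ) : ∑ x, bern Q x = 1 := by
  have := sum_bern_mul_prod Q (fun _ _ => 1)
  simpa using this

theorem sum_bern_mul_apply (Q : Fin m → ℝ) (i : Fin m) (f : Bool → ℝ) :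
    ∑ x, bern Q x * f (x i) = Q i * f true + (1 - Q i) * f false := by
  have h := sum_bern_mul_prod Q (fun k b => if k = i then f b else 1)
  simp only [Finset.prod_ite_eq', Finset.mem_univ, if_true] at h
  rw [h, Finset.prod_eq_single i]
  · simp
  · intro k _ hk; simp [hk]
  · simp

theorem sum_bern_mul_apply_mul_apply (Q : Fin m → ℝ) {i j : Fin m} (hij : i ≠ j)
    (f g : Bool → ℝ) :
    ∑ x, bern Q x * (f (x i) * g (x j)) =
      (Q i * f true + (1 - Q i) * f false) * (Q j * g true + (1 - Q j) * g false) := by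
  have h := sum_bern_mul_prod Q
    (fun k b => (if k = i then f b else 1) * (if k = j then g b else 1))
  simp only [Finset.prod_mul_distrib, Finset.prod_ite_eq', Finset.mem_univ, if_true] at h
  rw [h]
  have e : ∀ k, (Q k * ((if k = i then f true else 1) * if k = j then g true else 1) +
      (1 - Q k) * ((if k = i then f false else 1) * if k = j then g false else 1)) =
      (if k = i then Q k * f true + (1 - Q k) * f false else 1) *
        (if k = j then Q k * g true + (1 - Q k) * g false else 1) := fun k => by
    by_cases h1 : k = i
    · subst h1; simp [hij]
    · by_cases h2 : k = j
      · subst h2; simp [h1]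
      · simp [h1, h2]
  simp only [e, Finset.prod_mul_distrib, Finset.prod_ite_eq', Finset.mem_univ, if_true]

theorem sum_bern_mul_discordant (Q : Fin m → ℝ) {i j : Fin m} (hij : i ≠ j) :
    ∑ x, bern Q x * (if (x i != x j) = true then 1 else 0) =
      Q i * (1 - Q j) + (1 - Q i) * Q j := by
  have h1 := sum_bern_mul_apply_mul_apply Q hij (fun b => if b then 1 else 0)
    (fun b => if b then 0 else 1)
  have h2 := sum_bern_mul_apply_mul_apply Q hij (fun b => if b then 0 else 1)
    (fun b => if b then 1 else 0)
  have : ∀ x : Fin m → Bool, bern Q x * (if (x i != x j) = true then 1 else 0) =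
      bern Q x * ((if x i then 1 else 0) * (if x j then 0 else 1)) +
      bern Q x * ((if x i then 0 else 1) * (if x j then 1 else 0)) := fun x => by
    cases x i <;> cases x j <;> simp
  rw [Finset.sum_congr rfl fun x _ => this x, Finset.sum_add_distrib, h1, h2]
  simp

theorem le_discordance {κ s t : ℝ} (hκ : 1 ≤ κ) (hs : 1 ≤ s * (1 + κ)) (ht : 1 ≤ t * (1 + κ))
    (hs' : 1 ≤ (1 - s) * (1 + κ)) (ht' : 1 ≤ (1 - t) * (1 + κ)) :
    1 / (2 * κ) ≤ s * (1 - t) + (1 - s) * t := by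
  set a := s * (1 + κ) - 1 with ha
  set b := t * (1 + κ) - 1 with hb
  have ha0 : 0 ≤ a := by linarith
  have hb0 : 0 ≤ b := by linarith
  have ha1 : 0 ≤ κ - 1 - a := by linarith
  have hb1 : 0 ≤ κ - 1 - b := by linarith
  have e : (s * (1 - t) + (1 - s) * t) * (1 + κ) ^ 2 =
      2 * κ + (κ - 1 - a) * b + (κ - 1 - b) * a := by rw [ha, hb]; ring
  have h1 : 2 * κ ≤ (s * (1 - t) + (1 - s) * t) * (1 + κ) ^ 2 := by
    rw [e]; linarith [mul_nonneg ha1 hb0, mul_nonneg hb1 ha0]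
  rw [div_le_iff₀ (by positivity)]
  set d := s * (1 - t) + (1 - s) * t
  have h2 : (1 + κ) ^ 2 ≤ 4 * κ ^ 2 := by nlinarith
  have hd : 0 ≤ d := by
    by_contra! hneg
    nlinarith [sq_nonneg (1 + κ), mul_nonneg (neg_nonneg.mpr hneg.le) (sq_nonneg (1 + κ))]
  have h3 : 2 * κ ≤ d * (4 * κ ^ 2) := h1.trans (mul_le_mul_of_nonneg_left h2 hd)
  have h4 : 2 * κ * 1 ≤ 2 * κ * (d * (2 * κ)) := by linarith
  exact le_of_mul_le_mul_left h4 (by positivity)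

/-- The observed items of a single user. -/
def items (a : Fin m → Bool) : Finset (Fin m) := Finset.univ.filter fun i => a i = true

theorem card_pairs_eq_half {r : Fin m → Fin m → Bool} (h1 : ∀ i j, r i j = r j i)
    (h2 : ∀ i, r i i = false) :
    (((Finset.univ.filter fun ij : Fin m × Fin m => ij.1 < ij.2 ∧ r ij.1 ij.2 = true).card : ℕ) : ℝ)
      = (∑ i, ∑ j, if r i j = true then (1 : ℝ) else 0) / 2 := by
  rw [← sum_lt_eq_half (f := fun i j => if r i j = true then (1 : ℝ) else 0)
    (fun i j => by rw [h1]) (fun i => by simp [h2]), ← (Equiv.prodComm (Fin m) (Fin m)).sum_comp,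
    Finset.card_filter]
  push_cast
  refine Finset.sum_congr rfl fun ij _ => ?_
  change _ = if ij.1 < ij.2 then (if r ij.2 ij.1 = true then (1 : ℝ) else 0) else 0
  rw [h1, ite_and]

theorem IsPairing.sum_eq {s : Finset (Fin m)} {r : Fin m → Fin m → Bool} (h : IsPairing s r) :
    (∑ i, ∑ j, if r i j = true then (1 : ℝ) else 0) = 2 * ((s.card / 2 : ℕ) : ℝ) := by
  have := card_pairs_eq_half h.1 h.2.1
  rw [h.2.2.2.2] at this
  linarith

theorem card_items_comp (a : Fin m → Bool) (σ : Equiv.Perm (Fin m)) :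
    (items (fun i => a (σ i))).card = (items a).card := by
  refine Finset.card_bij (fun i _ => σ i) ?_ ?_ ?_
  · intro i hi; simpa [items] using hi
  · intro i _ j _ h; exact σ.injective h
  · intro j hj; exact ⟨σ.symm j, by simpa [items] using hj, by simp⟩

theorem IsPairing.comp {a : Fin m → Bool} {r : Fin m → Fin m → Bool} (h : IsPairing (items a) r)
    (σ : Equiv.Perm (Fin m)) :
    IsPairing (items fun i => a (σ i)) (fun i j => r (σ i) (σ j)) := by
  refine ⟨fun i j => h.1 _ _, fun i => h.2.1 _, fun i j hij => ?_, fun i j k hj hk => ?_, ?_⟩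
  · simpa [items] using h.2.2.1 _ _ hij
  · exact σ.injective (h.2.2.2.1 _ _ _ hj hk)
  · have e := card_pairs_eq_half (r := fun i j => r (σ i) (σ j)) (fun i j => h.1 _ _)
      (fun i => h.2.1 _)
    have e2 : (∑ i, ∑ j, if r (σ i) (σ j) = true then (1 : ℝ) else 0) =
        ∑ i, ∑ j, if r i j = true then (1 : ℝ) else 0 := by
      rw [← Equiv.sum_comp σ (fun i => ∑ j, if r i j = true then (1 : ℝ) else 0)]
      refine Finset.sum_congr rfl fun i _ => ?_
      exact Equiv.sum_comp σ (fun j => if r (σ i) j = true then (1 : ℝ) else 0)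
    rw [e2, h.sum_eq] at e
    rw [card_items_comp]
    have e3 : (2 * ((items a).card / 2 : ℕ) : ℝ) / 2 = (((items a).card / 2 : ℕ) : ℝ) := by ring
    rw [e3] at e
    exact_mod_cast e

/-- Permuting the items. -/
def permuted (σ : Equiv.Perm (Fin m)) : (Fin m → Fin m → Bool) ≃ (Fin m → Fin m → Bool) where
  toFun r := fun i j => r (σ i) (σ j)
  invFun r := fun i j => r (σ.symm i) (σ.symm j)
  left_inv r := by simp
  right_inv r := by simp

theorem isPairing_permuted_iff (a : Fin m → Bool) (r : Fin m → Fin m → Bool)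
    (σ : Equiv.Perm (Fin m)) :
    IsPairing (items fun i => a (σ i)) (permuted σ r) ↔ IsPairing (items a) r := by
  refine ⟨fun h => ?_, fun h => h.comp σ⟩
  have := h.comp σ.symm
  simpa [permuted] using this

open scoped Classical in
/-- The law of the uniformly random pairing of the observed items `a`. -/
noncomputable def pairW (a : Fin m → Bool) (r : Fin m → Fin m → Bool) : ℝ :=
  if IsPairing (items a) r then ((pairingCount (items a) : ℝ))⁻¹ else 0

theorem pairW_nonneg (a : Fin m → Bool) (r : Fin m → Fin m → Bool) : 0 ≤ pairW a r := by
  unfold pairW; split_ifs <;> positivity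

theorem pairW_permuted (a : Fin m → Bool) (r : Fin m → Fin m → Bool) (σ : Equiv.Perm (Fin m)) :
    pairW (fun i => a (σ i)) (permuted σ r) = pairW a r := by
  have hc : pairingCount (items fun i => a (σ i)) = pairingCount (items a) :=
    (Nat.card_congr ((permuted σ).subtypeEquiv fun r => (isPairing_permuted_iff a r σ).symm)).symm
  unfold pairW
  rw [hc]
  by_cases h : IsPairing (items a) r
  · rw [if_pos h, if_pos ((isPairing_permuted_iff a r σ).mpr h)]
  · rw [if_neg h, if_neg fun h' => h ((isPairing_permuted_iff a r σ).mp h')]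

theorem sum_pairW_le_one (a : Fin m → Bool) : ∑ r, pairW a r ≤ 1 := by
  classical
  unfold pairW
  rw [← Finset.sum_filter, Finset.sum_const, nsmul_eq_mul, pairingCount, Nat.card_eq_fintype_card,
    Fintype.card_subtype]
  exact mul_inv_le_one

/-- The probability that a pair of items is selected. -/
noncomputable def pairProb (p : ℝ) (i j : Fin m) : ℝ :=
  ∑ a, ∑ r, bern (fun _ => p) a * pairW a r * if r i j = true then 1 else 0

theorem pairProb_permuted (p : ℝ) (i j : Fin m) (σ : Equiv.Perm (Fin m)) :
    pairProb p (σ i) (σ j) = pairProb p i j := by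
  unfold pairProb
  rw [← Equiv.sum_comp (Equiv.arrowCongr σ.symm (Equiv.refl Bool))
    (fun a => ∑ r, bern (fun _ => p) a * pairW a r * if r i j = true then 1 else 0)]
  refine Finset.sum_congr rfl fun a _ => ?_
  have e : (Equiv.arrowCongr σ.symm (Equiv.refl Bool)) a = fun i => a (σ i) := by
    ext i; simp [Equiv.arrowCongr]
  rw [e, ← Equiv.sum_comp (permuted σ) (fun r => bern (fun _ => p) (fun i => a (σ i)) *
    pairW (fun i => a (σ i)) r * if r i j = true then 1 else 0)]
  refine Finset.sum_congr rfl fun r _ => ?_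
  have hb : bern (fun _ => p) (fun i => a (σ i)) = bern (fun _ => p) a :=
    Equiv.prod_comp σ (fun i => if a i then p else 1 - p)
  rw [pairW_permuted, hb]
  rfl

theorem pairProb_eq (p : ℝ) {i j k l : Fin m} (hij : i ≠ j) (hkl : k ≠ l) :
    pairProb p i j = pairProb p k l := by
  set j' := Equiv.swap i k j with hj'
  have hj'k : j' ≠ k := by
    rw [hj']
    intro h
    have : Equiv.swap i k j = Equiv.swap i k i := by rw [h, Equiv.swap_apply_left]
    exact hij ((Equiv.swap i k).injective this).symm
  have h := pairProb_permuted p i j ((Equiv.swap i k).trans (Equiv.swap j' l))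
  rw [← h]
  congr 1
  · simp only [Equiv.trans_apply, Equiv.swap_apply_left]
    exact Equiv.swap_apply_of_ne_of_ne hj'k.symm hkl
  · simp only [Equiv.trans_apply, ← hj', Equiv.swap_apply_left]

theorem pairProb_self (p : ℝ) (i : Fin m) : pairProb p i i = 0 := by
  unfold pairProb
  refine Finset.sum_eq_zero fun a _ => Finset.sum_eq_zero fun r _ => ?_
  unfold pairW
  by_cases h : IsPairing (items a) r
  · simp [h.2.1 i]
  · simp [h]

theorem two_mul_half_cast (k : ℕ) :
    2 * ((k / 2 : ℕ) : ℝ) = k - (1 - (-1) ^ k) / 2 := by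
  rcases Nat.even_or_odd k with h | h
  · have h2 : 2 * (k / 2) = k := Nat.two_mul_div_two_of_even h
    have : (2 * ((k / 2 : ℕ) : ℝ)) = k := by exact_mod_cast h2
    rw [this, h.neg_one_pow]; ring
  · have h2 : 2 * (k / 2) + 1 = k := Nat.two_mul_div_two_add_one_of_odd h
    have : (2 * ((k / 2 : ℕ) : ℝ)) + 1 = k := by exact_mod_cast h2
    rw [h.neg_one_pow]; linarith

theorem sum_bern_mul_two_mul_half (p : ℝ) :
    ∑ a : Fin m → Bool, bern (fun _ => p) a * (2 * (((items a).card / 2 : ℕ) : ℝ)) =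
      m * p - (1 - (1 - 2 * p) ^ m) / 2 := by
  have h1 : ∑ a : Fin m → Bool, bern (fun _ => p) a * ((items a).card : ℝ) = m * p := by
    have : ∀ a : Fin m → Bool, bern (fun _ => p) a * ((items a).card : ℝ) =
        ∑ i, bern (fun _ => p) a * (if a i then 1 else 0) := fun a => by
      rw [← Finset.mul_sum, items, Finset.card_filter]
      push_cast
      rfl
    rw [Finset.sum_congr rfl fun a _ => this a, Finset.sum_comm]
    simp only [fun i => sum_bern_mul_apply (fun _ : Fin m => p) i (fun b => if b then 1 else 0)]
    simp
  have h2 : ∑ a : Fin m → Bool, bern (fun _ => p) a * (-1 : ℝ) ^ (items a).card =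
      (1 - 2 * p) ^ m := by
    have h := sum_bern_mul_prod (fun _ : Fin m => p) (fun _ b => if b then -1 else 1)
    have : ∀ a : Fin m → Bool, (∏ i, if a i then (-1 : ℝ) else 1) = (-1 : ℝ) ^ (items a).card :=
      fun a => by rw [items, Finset.prod_ite]; simp
    simp only [this] at h
    rw [h]
    simp only [if_true, Finset.prod_const, Finset.card_univ, Fintype.card_fin]
    congr 1
    simp; ring
  simp only [two_mul_half_cast]
  have e : ∀ a : Fin m → Bool, bern (fun _ => p) a *
      (((items a).card : ℝ) - (1 - (-1) ^ (items a).card) / 2) =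
      bern (fun _ => p) a * ((items a).card : ℝ) - bern (fun _ => p) a / 2 +
      bern (fun _ => p) a * (-1 : ℝ) ^ (items a).card / 2 := fun a => by ring
  rw [Finset.sum_congr rfl fun a _ => e a, Finset.sum_add_distrib, Finset.sum_sub_distrib,
    ← Finset.sum_div, ← Finset.sum_div, h1, h2, sum_bern]
  ring

theorem two_thirds_le_expected_matched {p : ℝ} (hp1 : p ≤ 1) (hmp : 2 ≤ m * p) :
    2 / 3 * p * (m - 1) ≤ m * p - (1 - (1 - 2 * p) ^ m) / 2 := by
  rcases le_or_gt p (1 / 2) with h | h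
  · have : 0 ≤ (1 - 2 * p) ^ m := pow_nonneg (by linarith) m
    have hp : 0 < p := by
      by_contra! hneg
      nlinarith [mul_nonneg (Nat.cast_nonneg (α := ℝ) m) (neg_nonneg.mpr hneg)]
    nlinarith
  · have : -1 ≤ (1 - 2 * p) ^ m := by
      have h1 : |(1 - 2 * p) ^ m| ≤ 1 := by
        rw [abs_pow]
        exact pow_le_one₀ (abs_nonneg _) (abs_le.mpr ⟨by linarith, by linarith⟩)
      exact (abs_le.mp h1).1
    rcases le_or_gt m 3 with hm | hm
    · have hm' : (m : ℝ) ≤ 3 := by exact_mod_cast hm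
      nlinarith
    · have hm' : (4 : ℝ) ≤ m := by exact_mod_cast hm
      nlinarith

theorem two_thirds_le_mul_pairProb {p : ℝ} (hp0 : 0 < p) (hp1 : p ≤ 1) (hmp : 2 ≤ m * p)
    (htot : ∑ a : Fin m → Bool, ∑ r, bern (fun _ => p) a * pairW a r = 1) {i j : Fin m}
    (hij : i ≠ j) : 2 / 3 * p ≤ m * pairProb p i j := by
  have hm2 : (2 : ℝ) ≤ m := by nlinarith [(Nat.cast_nonneg m : (0 : ℝ) ≤ m)]
  have hb : ∀ a : Fin m → Bool, bern (fun _ => p) a * ∑ r, pairW a r = bern (fun _ => p) a := by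
    have hle : ∀ a ∈ (Finset.univ : Finset (Fin m → Bool)),
        bern (fun _ => p) a * ∑ r, pairW a r ≤ bern (fun _ => p) a := fun a _ =>
      mul_le_of_le_one_right (bern_nonneg (fun _ => hp0.le) (fun _ => hp1) a) (sum_pairW_le_one a)
    have hsum : ∑ a : Fin m → Bool, bern (fun _ => p) a * ∑ r, pairW a r =
        ∑ a : Fin m → Bool, bern (fun _ => p) a := by
      rw [sum_bern]
      simpa only [Finset.mul_sum] using htot
    exact fun a => (Finset.sum_eq_sum_iff_of_le hle).mp hsum a (Finset.mem_univ a)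
  have h1 : ∑ k : Fin m, ∑ l : Fin m, pairProb p k l =
      ∑ a : Fin m → Bool, bern (fun _ => p) a * (2 * (((items a).card / 2 : ℕ) : ℝ)) := by
    unfold pairProb
    have e1 : ∀ k : Fin m, ∑ l, ∑ a, ∑ r, bern (fun _ => p) a * pairW a r *
        (if r k l = true then (1 : ℝ) else 0) = ∑ a, ∑ r, ∑ l, bern (fun _ => p) a * pairW a r *
        (if r k l = true then (1 : ℝ) else 0) := fun k => by
      rw [Finset.sum_comm]
      refine Finset.sum_congr rfl fun a _ => ?_
      rw [Finset.sum_comm]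
    refine (Finset.sum_congr rfl fun k _ => e1 k).trans ?_
    rw [Finset.sum_comm]
    refine Finset.sum_congr rfl fun a _ => ?_
    rw [Finset.sum_comm]
    conv_rhs => rw [← hb a, mul_assoc, Finset.sum_mul, Finset.mul_sum]
    refine Finset.sum_congr rfl fun r _ => ?_
    simp only [← Finset.mul_sum]
    rw [mul_assoc]
    congr 1
    by_cases h : IsPairing (items a) r
    · rw [h.sum_eq]
    · simp [pairW, h]
  have h2 : ∑ k : Fin m, ∑ l, pairProb p k l = m * (m - 1) * pairProb p i j := by
    have e : ∀ k l : Fin m, pairProb p k l =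
        pairProb p i j - if l = k then pairProb p i j else 0 := fun k l => by
      by_cases h : l = k
      · subst h; simp [pairProb_self]
      · simp [h, pairProb_eq p (Ne.symm h) hij]
    rw [Finset.sum_congr rfl fun k _ => Finset.sum_congr rfl fun l _ => e k l]
    simp only [Finset.sum_sub_distrib, Finset.sum_ite_eq', Finset.mem_univ,
      if_true, Finset.sum_const, Finset.card_univ, Fintype.card_fin, nsmul_eq_mul]
    ring
  rw [h2, sum_bern_mul_two_mul_half] at h1
  have h3 := two_thirds_le_expected_matched hp1 hmp
  rw [← h1] at h3
  have h4 : (m - 1 : ℝ) * (2 / 3 * p) ≤ (m - 1) * (m * pairProb p i j) := by linarith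
  exact le_of_mul_le_mul_left h4 (by linarith)

end User

section Tail
open NormedSpace

variable {n m : ℕ}

/-- The data of a single user: observed items, responses and selected pairs. -/
abbrev UserData (m : ℕ) : Type :=
  (Fin m → Bool) × (Fin m → Bool) × (Fin m → Fin m → Bool)

/-- The law of the data of a user with response probabilities `Q`. -/
noncomputable def userW (p : ℝ) (Q : Fin m → ℝ) (u : UserData m) : ℝ :=
  bern (fun _ => p) u.1 * bern Q u.2.1 * pairW u.1 u.2.2

theorem userW_nonneg {p : ℝ} (hp0 : 0 ≤ p) (hp1 : p ≤ 1) {Q : Fin m → ℝ} (h0 : ∀ i, 0 ≤ Q i)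
    (h1 : ∀ i, Q i ≤ 1) (u : UserData m) : 0 ≤ userW p Q u :=
  mul_nonneg (mul_nonneg (bern_nonneg (fun _ => hp0) (fun _ => hp1) _) (bern_nonneg h0 h1 _))
    (pairW_nonneg _ _)

theorem sum_userW_mul (p : ℝ) (Q : Fin m → ℝ) (f : (Fin m → Bool) → (Fin m → Fin m → Bool) → ℝ)
    (g : (Fin m → Bool) → ℝ) :
    ∑ u, userW p Q u * (f u.1 u.2.2 * g u.2.1) =
      (∑ a, ∑ r, bern (fun _ => p) a * pairW a r * f a r) * ∑ x, bern Q x * g x := by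
  simp only [Fintype.sum_prod_type, userW]
  rw [Finset.sum_mul]
  refine Finset.sum_congr rfl fun a _ => ?_
  rw [Finset.sum_comm, Finset.sum_mul]
  refine Finset.sum_congr rfl fun r _ => ?_
  rw [Finset.mul_sum]
  exact Finset.sum_congr rfl fun x _ => by ring

theorem sum_userW (p : ℝ) (Q : Fin m → ℝ) :
    ∑ u, userW p Q u = ∑ a : Fin m → Bool, ∑ r, bern (fun _ => p) a * pairW a r := by
  have h := sum_userW_mul p Q (fun _ _ => 1) (fun _ => 1)
  simpa [sum_bern] using h

theorem sum_userW_mul_apply_le {p : ℝ} (hp0 : 0 ≤ p) (hp1 : p ≤ 1) (Q : Fin m → ℝ) (i : Fin m)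
    {f : Bool → ℝ} (hf : ∀ b, 0 ≤ f b) :
    ∑ u, userW p Q u * f (u.1 i) ≤ p * f true + (1 - p) * f false := by
  have h := sum_userW_mul p Q (fun a _ => f (a i)) (fun _ => 1)
  simp only [mul_one, sum_bern] at h
  rw [h, ← sum_bern_mul_apply (fun _ => p) i f]
  refine Finset.sum_le_sum fun a _ => ?_
  have hb := bern_nonneg (fun _ => hp0) (fun _ => hp1) a
  calc ∑ r, bern (fun _ => p) a * pairW a r * f (a i)
      = bern (fun _ => p) a * f (a i) * ∑ r, pairW a r := by
        rw [Finset.mul_sum]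
        exact Finset.sum_congr rfl fun r _ => by ring
    _ ≤ bern (fun _ => p) a * f (a i) :=
        mul_le_of_le_one_right (mul_nonneg hb (hf _)) (sum_pairW_le_one a)

theorem sum_userW_le_one {p : ℝ} (hp0 : 0 ≤ p) (hp1 : p ≤ 1) (Q : Fin m → ℝ) :
    ∑ u, userW p Q u ≤ 1 := by
  rw [sum_userW, ← sum_bern (fun _ : Fin m => p)]
  refine Finset.sum_le_sum fun a _ => ?_
  rw [← Finset.mul_sum]
  exact mul_le_of_le_one_right (bern_nonneg (fun _ => hp0) (fun _ => hp1) a) (sum_pairW_le_one a)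

theorem sum_userW_mul_discW (p : ℝ) (Q : Fin m → ℝ) {i j : Fin m} (hij : i ≠ j) :
    ∑ u, userW p Q u * discW u.2.1 u.2.2 i j =
      pairProb p i j * (Q i * (1 - Q j) + (1 - Q i) * Q j) := by
  have h := sum_userW_mul p Q (fun _ r => if r i j = true then 1 else 0)
    (fun x => if (x i != x j) = true then 1 else 0)
  rw [sum_bern_mul_discordant Q hij] at h
  rw [pairProb, ← h]
  refine Finset.sum_congr rfl fun u _ => ?_
  congr 1
  unfold discW
  cases u.2.2 i j <;> simp

theorem le_sum_userW_mul_qForm {p κ : ℝ} (hp0 : 0 < p) (hp1 : p ≤ 1) (hmp : 2 ≤ m * p)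
    (hκ : 1 ≤ κ)
    (htot : ∑ a : Fin m → Bool, ∑ r, bern (fun _ => p) a * pairW a r = 1) {Q : Fin m → ℝ}
    (hQ : ∀ i, 1 ≤ Q i * (1 + κ)) (hQ' : ∀ i, 1 ≤ (1 - Q i) * (1 + κ)) (v : Fin m → ℝ) :
    p / (3 * κ) * ((∑ i, v i ^ 2) - (∑ i, v i) ^ 2 / m) ≤
      ∑ u, userW p Q u * qForm (discW u.2.1 u.2.2) v := by
  have hm : (0 : ℝ) < m := by
    by_contra! h
    nlinarith
  have e : ∑ u, userW p Q u * qForm (discW u.2.1 u.2.2) v =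
      qForm (fun i j => ∑ u, userW p Q u * discW u.2.1 u.2.2 i j) v := by
    rw [qForm_sum]
    exact Finset.sum_congr rfl fun u _ => (qForm_smul _ _ _).symm
  have e2 : p / (3 * κ) * ((∑ i, v i ^ 2) - (∑ i, v i) ^ 2 / m) =
      qForm (fun _ _ => p / (3 * κ * m) * 1) v := by
    rw [qForm_smul, qForm_one]
    field_simp
  rw [e, e2]
  refine qForm_mono (fun i j hij => ?_) v
  rw [sum_userW_mul_discW p Q hij.ne', mul_one]
  have h1 := two_thirds_le_mul_pairProb hp0 hp1 hmp htot hij.ne'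
  have h2 := le_discordance hκ (hQ i) (hQ j) (hQ' i) (hQ' j)
  have h3 : 2 * p / (3 * m) ≤ pairProb p i j := by
    rw [div_le_iff₀ (by positivity)]
    linarith
  calc p / (3 * κ * m) = 2 * p / (3 * m) * (1 / (2 * κ)) := by field_simp
    _ ≤ _ := mul_le_mul h3 h2 (by positivity) (le_trans (by positivity) h3)

/-- The negative, rescaled Laplacian of one user, regularised along the all-ones vector. -/
noncomputable def userM (μ : ℝ) (u : UserData m) : Matrix (Fin m) (Fin m) ℝ :=
  -(1 / 12 : ℝ) • (wLap (discW u.2.1 u.2.2) + (μ / m) • Matrix.vecMulVec 1 1)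

theorem userM_transpose (μ : ℝ) (u : UserData m) : (userM μ u)ᵀ = userM μ u := by
  rw [userM, Matrix.transpose_smul, Matrix.transpose_add, wLap_transpose, Matrix.transpose_smul,
    Matrix.transpose_vecMulVec]

theorem dotProduct_userM (μ : ℝ) (u : UserData m) (v : Fin m → ℝ) :
    v ⬝ᵥ (userM μ u *ᵥ v) =
      -(1 / 12) * (qForm (discW u.2.1 u.2.2) v + μ * ((∑ i, v i) ^ 2 / m)) := by
  rw [userM, Matrix.smul_mulVec, dotProduct_smul, Matrix.add_mulVec, dotProduct_add,
    dotProduct_wLap, Matrix.smul_mulVec, dotProduct_smul, Matrix.vecMulVec_mulVec]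
  simp only [one_dotProduct, op_smul_eq_smul, dotProduct_smul, dotProduct_one,
    smul_eq_mul]
  ring

theorem sum_sq_div_le (v : Fin m → ℝ) : (∑ i, v i) ^ 2 / m ≤ ∑ i, v i ^ 2 := by
  rcases Nat.eq_zero_or_pos m with h | h
  · subst h; simp
  · rw [div_le_iff₀ (by exact_mod_cast h), mul_comm]
    simpa using sq_sum_le_card_mul_sum_sq (s := Finset.univ) (f := v)

theorem dotProduct_self_eq_sum_sq (v : Fin m → ℝ) : v ⬝ᵥ v = ∑ i, v i ^ 2 := by
  simp [dotProduct, pow_two]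

theorem sum_userW_mul_exp_le {p κ : ℝ} (hp0 : 0 < p) (hp1 : p ≤ 1) (hmp : 2 ≤ m * p)
    (hκ : 1 ≤ κ)
    (htot : ∑ a : Fin m → Bool, ∑ r, bern (fun _ => p) a * pairW a r = 1) {Q : Fin m → ℝ}
    (hQ : ∀ i, 1 ≤ Q i * (1 + κ)) (hQ' : ∀ i, 1 ≤ (1 - Q i) * (1 + κ)) (v : Fin m → ℝ) :
    ∑ u, userW p Q u * (v ⬝ᵥ (exp (userM (p / (3 * κ)) u) *ᵥ v)) ≤
      (1 - 7 / 96 * (p / (3 * κ))) * (v ⬝ᵥ v) := by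
  set μ := p / (3 * κ) with hμ
  have hμ0 : 0 ≤ μ := by positivity
  have hμ1 : μ ≤ 1 := by rw [hμ, div_le_one (by positivity)]; linarith
  have hw : ∀ u, 0 ≤ userW p Q u := userW_nonneg hp0.le hp1
    (fun i => by by_contra! h; nlinarith [hQ i])
    (fun i => by by_contra! h; nlinarith [hQ' i])
  have hterm : ∀ u, userW p Q u * (v ⬝ᵥ (exp (userM μ u) *ᵥ v)) ≤
      userW p Q u * ((v ⬝ᵥ v) - 7 / 96 * (μ * ((∑ i, v i) ^ 2 / m))) -
        7 / 96 * (userW p Q u * qForm (discW u.2.1 u.2.2) v) := fun u => by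
    by_cases hr : IsPairing (items u.1) u.2.2
    · have h := dotProduct_exp_mulVec_le (userM_transpose μ u) (fun v => ?_) (fun v => ?_) v
      · rw [dotProduct_userM] at h
        have := mul_le_mul_of_nonneg_left h (hw u)
        linarith
      · rw [dotProduct_userM, dotProduct_self_eq_sum_sq]
        have h1 := qForm_le_of_row_sum_le (D := 1) (discW_symm hr u.2.1)
          (discW_nonneg u.2.1 u.2.2)
          (fun i => (discW_row_sum_le hr u.2.1 i).trans (by split_ifs <;> norm_num)) v
        have h2 := sum_sq_div_le v
        have h3 : 0 ≤ (∑ i, v i) ^ 2 / m := by positivity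
        nlinarith
      · rw [dotProduct_userM]
        have h1 := qForm_nonneg (discW_nonneg u.2.1 u.2.2) v
        have h3 : 0 ≤ μ * ((∑ i, v i) ^ 2 / m) := by positivity
        linarith
    · have : userW p Q u = 0 := by simp [userW, pairW, hr]
      simp [this]
  refine (Finset.sum_le_sum fun u _ => hterm u).trans ?_
  rw [Finset.sum_sub_distrib, ← Finset.sum_mul, ← Finset.mul_sum, sum_userW, htot]
  have h := le_sum_userW_mul_qForm hp0 hp1 hmp hκ htot hQ hQ' v
  rw [← hμ] at h
  rw [dotProduct_self_eq_sum_sq]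
  linarith

theorem sum_prod_userW_mul_trace_exp_le {p κ : ℝ} (hp0 : 0 < p) (hp1 : p ≤ 1) (hmp : 2 ≤ m * p)
    (hκ : 1 ≤ κ)
    (htot : ∑ a : Fin m → Bool, ∑ r, bern (fun _ => p) a * pairW a r = 1) {Q : Fin n → Fin m → ℝ}
    (hQ : ∀ t i, 1 ≤ Q t i * (1 + κ)) (hQ' : ∀ t i, 1 ≤ (1 - Q t i) * (1 + κ)) :
    ∑ u : Fin n → UserData m, (∏ t, userW p (Q t) (u t)) *
        (exp (∑ t, userM (p / (3 * κ)) (u t))).trace ≤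
      Real.exp (-(7 / 96) * (n * (p / (3 * κ)))) * m := by
  set μ := p / (3 * κ) with hμ
  have hμ1 : μ ≤ 1 := by rw [hμ, div_le_one (by positivity)]; linarith
  have hm : 0 < m := by
    rcases Nat.eq_zero_or_pos m with h | h
    · subst h; norm_num at hmp
    · exact h
  have : Nonempty (Fin m) := ⟨⟨0, hm⟩⟩
  have hc : 0 ≤ 1 - 7 / 96 * μ := by linarith
  have h := sum_prod_mul_trace_exp_le (userM (m := m) μ) (userM_transpose μ) hc n
    (fun t => userW p (Q t))
    (fun t => userW_nonneg hp0.le hp1 (fun i => by by_contra! h; nlinarith [hQ t i])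
      (fun i => by by_contra! h; nlinarith [hQ' t i]))
    (fun t => sum_userW_mul_exp_le hp0 hp1 hmp hκ htot (hQ t) (hQ' t)) 0 (by simp)
  simp only [zero_add, NormedSpace.exp_zero, Matrix.trace_one, Fintype.card_fin] at h
  refine h.trans (mul_le_mul_of_nonneg_right ?_ (by positivity))
  calc (1 - 7 / 96 * μ) ^ n ≤ Real.exp (-(7 / 96) * μ) ^ n :=
        pow_le_pow_left₀ hc (by linarith [Real.add_one_le_exp (-(7 / 96) * μ)]) n
    _ = Real.exp (-(7 / 96) * (n * μ)) := by rw [← Real.exp_nat_mul]; congr 1; ring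

theorem exp_quarter_le : Real.exp (1 / 4) ≤ 1 + 5 / 16 := by
  have h := Real.abs_exp_sub_one_sub_id_le (x := 1 / 4) (by norm_num [abs_le])
  have := (abs_le.mp h).2
  norm_num at this ⊢
  linarith

theorem sum_prod_userW_mul_prod_le {p : ℝ} (hp0 : 0 ≤ p) (hp1 : p ≤ 1) {Q : Fin n → Fin m → ℝ}
    (h0 : ∀ t i, 0 ≤ Q t i) (h1 : ∀ t i, Q t i ≤ 1) (i : Fin m) :
    ∑ u : Fin n → UserData m, (∏ t, userW p (Q t) (u t)) *
        ∏ t, (if (u t).1 i = true then Real.exp (1 / 4) else 1) ≤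
      Real.exp (5 / 16 * (n * p)) := by
  have h := Finset.prod_univ_sum (fun _ : Fin n => (Finset.univ : Finset (UserData m)))
    (fun t u => userW p (Q t) u * (if u.1 i = true then Real.exp (1 / 4) else 1))
  simp only [Fintype.piFinset_univ, Finset.prod_mul_distrib] at h
  rw [← h]
  have hE := exp_quarter_le
  have hE0 := Real.exp_pos (1 / 4)
  calc ∏ t, ∑ u, userW p (Q t) u * (if u.1 i = true then Real.exp (1 / 4) else 1)
      ≤ ∏ _t : Fin n, Real.exp (5 / 16 * p) := by
        refine Finset.prod_le_prod (fun t _ => Finset.sum_nonneg fun u _ =>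
          mul_nonneg (userW_nonneg hp0 hp1 (h0 t) (h1 t) u) (by split_ifs <;> positivity))
          fun t _ => ?_
        refine (sum_userW_mul_apply_le hp0 hp1 (Q t) i
          (f := fun b => if b = true then Real.exp (1 / 4) else 1)
          (fun b => by split_ifs <;> positivity)).trans ?_
        have := Real.add_one_le_exp (5 / 16 * p)
        simp only [if_true, Bool.false_eq_true, if_false]
        nlinarith
    _ = Real.exp (5 / 16 * (n * p)) := by
        rw [Finset.prod_const, Finset.card_univ, Fintype.card_fin, ← Real.exp_nat_mul]
        congr 1; ring

theorem le_sum_qForm_of_trace_exp_lt {μ : ℝ} (u : Fin n → UserData m)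
    (h : Real.exp (n * μ / 16) * (exp (∑ t, userM μ (u t))).trace < 1) {v : Fin m → ℝ}
    (hv : ∑ i, v i = 0) :
    3 / 4 * (n * μ) * ∑ i, v i ^ 2 ≤ ∑ t, qForm (discW (u t).2.1 (u t).2.2) v := by
  set s := ∑ i, v i ^ 2 with hs
  have hs0 : 0 ≤ s := Finset.sum_nonneg fun i _ => sq_nonneg _
  rcases hs0.eq_or_lt with h0 | h0
  · rw [← h0, mul_zero]
    exact Finset.sum_nonneg fun t _ => qForm_nonneg (discW_nonneg _ _) v
  have hK : (∑ t, userM μ (u t))ᵀ = ∑ t, userM μ (u t) := by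
    rw [Matrix.transpose_sum]
    exact Finset.sum_congr rfl fun t _ => userM_transpose μ (u t)
  have hsq : (√s)⁻¹ * (√s)⁻¹ = s⁻¹ := by rw [← mul_inv, Real.mul_self_sqrt hs0]
  have hunit : ((√s)⁻¹ • v) ⬝ᵥ ((√s)⁻¹ • v) = 1 := by
    rw [smul_dotProduct, dotProduct_smul, smul_smul, hsq, dotProduct_self_eq_sum_sq, ← hs,
      smul_eq_mul, inv_mul_cancel₀ h0.ne']
  have hle := exp_dotProduct_le_trace_exp hK hunit
  rw [Matrix.mulVec_smul, smul_dotProduct, dotProduct_smul, smul_smul, hsq, smul_eq_mul,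
    Matrix.sum_mulVec, dotProduct_sum] at hle
  simp only [dotProduct_userM, hv] at hle
  rw [← Finset.mul_sum] at hle
  simp only [ne_eq, OfNat.ofNat_ne_zero, not_false_eq_true, zero_pow, zero_div, mul_zero,
    add_zero] at hle
  set T := ∑ t, qForm (discW (u t).2.1 (u t).2.2) v
  have h2 := (mul_le_mul_of_nonneg_left hle (Real.exp_pos (n * μ / 16)).le).trans_lt h
  rw [← Real.exp_add, Real.exp_lt_one_iff] at h2
  have h3 : n * μ / 16 * s < T / 12 := by
    have : s * (n * μ / 16 + s⁻¹ * (-(1 / 12) * T)) < s * 0 := mul_lt_mul_of_pos_left h2 h0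
    have e : s * (n * μ / 16 + s⁻¹ * (-(1 / 12) * T)) = n * μ / 16 * s - T / 12 := by
      field_simp
      ring
    linarith
  linarith

theorem sum_le_of_prod_exp_lt {D : ℝ} (b : Fin n → Bool)
    (h : Real.exp (-(3 / 8) * D) * ∏ t, (if b t = true then Real.exp (1 / 4) else 1) < 1) :
    (∑ t, if b t = true then (1 : ℝ) else 0) ≤ 3 / 2 * D := by
  have e : ∏ t, (if b t = true then Real.exp (1 / 4) else 1) =
      Real.exp (1 / 4 * ∑ t, if b t = true then (1 : ℝ) else 0) := by
    rw [Finset.mul_sum, Real.exp_sum]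
    exact Finset.prod_congr rfl fun t _ => by split_ifs <;> simp
  rw [e, ← Real.exp_add, Real.exp_lt_one_iff] at h
  linarith

end Tail

section Law

variable {n m : ℕ}

/-- Markov's inequality for a map into a finite type with dominated point masses. -/
theorem measure_le_ofReal_sum_mul {Ω Γ : Type*} [MeasurableSpace Ω] [Fintype Γ] (P : Measure Ω)
    {Φ : Ω → Γ} {W : Γ → ℝ} (hW : ∀ u, 0 ≤ W u)
    (hlaw : ∀ u, P {ω | Φ ω = u} ≤ ENNReal.ofReal (W u)) {F : Γ → ℝ} (hF : ∀ u, 0 ≤ F u)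
    {B : Set Ω} (hB : ∀ ω ∈ B, 1 ≤ F (Φ ω)) :
    P B ≤ ENNReal.ofReal (∑ u, W u * F u) := by
  classical
  rw [ENNReal.ofReal_sum_of_nonneg fun u _ => mul_nonneg (hW u) (hF u)]
  have hsub : B ⊆ ⋃ u ∈ Finset.univ.filter (fun u => 1 ≤ F u), {ω | Φ ω = u} := fun ω hω => by
    simpa using hB ω hω
  calc P B ≤ ∑ u ∈ Finset.univ.filter (fun u => 1 ≤ F u), P {ω | Φ ω = u} :=
        (measure_mono hsub).trans (measure_biUnion_finset_le _ _)
    _ ≤ ∑ u ∈ Finset.univ.filter (fun u => 1 ≤ F u), ENNReal.ofReal (W u * F u) := by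
        refine Finset.sum_le_sum fun u hu => (hlaw u).trans (ENNReal.ofReal_le_ofReal ?_)
        exact le_mul_of_one_le_right (hW u) (by simpa using hu)
    _ ≤ _ := Finset.sum_le_sum_of_subset (Finset.filter_subset _ _)

theorem one_le_q_mul {ζ : Fin n → ℝ} {θ : Fin m → ℝ} {κ : ℝ} (hκ : 1 ≤ κ)
    (h : ∀ t i, |ζ t - θ i| ≤ Real.log κ) (t : Fin n) (i : Fin m) :
    1 ≤ q ζ θ t i * (1 + κ) ∧ 1 ≤ (1 - q ζ θ t i) * (1 + κ) := by
  have hz := Real.exp_pos (ζ t)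
  have ht := Real.exp_pos (θ i)
  have h1 := exp_le_mul_exp_of_abs_sub_le hκ (h t i)
  have h2 := exp_le_mul_exp_of_abs_sub_le hκ (abs_sub_comm (ζ t) (θ i) ▸ h t i)
  have e : 1 - q ζ θ t i = Real.exp (ζ t) / (Real.exp (ζ t) + Real.exp (θ i)) := by
    rw [q]; field_simp; ring
  rw [e, q, div_mul_eq_mul_div, div_mul_eq_mul_div, le_div_iff₀ (by positivity),
    le_div_iff₀ (by positivity)]
  constructor <;> linarith

/-- The data of all users at a sample point. -/
def userData {Ω : Type*} (A X : Ω → Fin n → Fin m → Bool)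
    (R : Ω → Fin 1 → Fin n → Fin m → Fin m → Bool) (ω : Ω) : Fin n → UserData m :=
  fun t => (A ω t, X ω t, R ω 0 t)

theorem HasRaschLaw.measure_userData_le {Ω : Type*} [MeasurableSpace Ω] {P : Measure Ω} {p : ℝ}
    {ζ : Fin n → ℝ} {θ : Fin m → ℝ} {A X : Ω → Fin n → Fin m → Bool}
    {R : Ω → Fin 1 → Fin n → Fin m → Fin m → Bool} (h : HasRaschLaw P p ζ θ A X R)
    (u : Fin n → UserData m) :
    P {ω | userData A X R ω = u} ≤ ENNReal.ofReal (∏ t, userW p (q ζ θ t) (u t)) := by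
  by_cases hv : ∀ t, IsPairing (items (u t).1) (u t).2.2
  · have h2 := h.2 (fun t => (u t).1) (fun t => (u t).2.1) (fun _ t => (u t).2.2)
      (fun _ t => hv t)
    have hsub : {ω | userData A X R ω = u} ⊆ {ω | A ω = (fun t => (u t).1) ∧
        X ω = (fun t => (u t).2.1) ∧ R ω = fun _ t => (u t).2.2} := fun ω hω => by
      have hω' : userData A X R ω = u := hω
      subst hω'
      refine ⟨rfl, rfl, ?_⟩
      funext k
      rw [Subsingleton.elim k 0]
      rfl
    refine (measure_mono hsub).trans (h2.le.trans (le_of_eq ?_))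
    congr 1
    simp only [userW, Finset.prod_mul_distrib, Finset.univ_unique, Finset.prod_singleton, bern]
    congr 1
    refine Finset.prod_congr rfl fun t _ => ?_
    rw [pairW, if_pos (hv t)]
    rfl
  · have : {ω | userData A X R ω = u} = ∅ := by
      refine Set.eq_empty_of_forall_notMem fun ω hω => hv fun t => ?_
      have hω' : userData A X R ω = u := hω
      subst hω'
      exact h.1 ω 0 t
    rw [this, measure_empty]
    exact zero_le

theorem HasRaschLaw.sum_bern_mul_pairW_eq_one {Ω : Type*} [MeasurableSpace Ω] {P : Measure Ω}
    [IsProbabilityMeasure P] {p : ℝ} (hp0 : 0 ≤ p) (hp1 : p ≤ 1)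
    {ζ : Fin n → ℝ} {θ : Fin m → ℝ} {A X : Ω → Fin n → Fin m → Bool}
    {R : Ω → Fin 1 → Fin n → Fin m → Fin m → Bool} (h : HasRaschLaw P p ζ θ A X R)
    (hq0 : ∀ t i, 0 ≤ q ζ θ t i) (hq1 : ∀ t i, q ζ θ t i ≤ 1) (hn : n ≠ 0) :
    ∑ a : Fin m → Bool, ∑ r, bern (fun _ => p) a * pairW a r = 1 := by
  have hw : ∀ t u, 0 ≤ userW p (q ζ θ t) u := fun t =>
    userW_nonneg hp0 hp1 (hq0 t) (hq1 t)
  have h1 := measure_le_ofReal_sum_mul P (B := Set.univ) (F := fun _ => 1)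
    (fun u => Finset.prod_nonneg fun t _ => hw t (u t)) h.measure_userData_le
    (fun _ => zero_le_one) (fun _ _ => le_rfl)
  rw [measure_univ, ENNReal.one_le_ofReal] at h1
  have h2 := Finset.prod_univ_sum (fun _ : Fin n => (Finset.univ : Finset (UserData m)))
    (fun t u => userW p (q ζ θ t) u)
  simp only [Fintype.piFinset_univ] at h2
  simp only [mul_one, ← h2, sum_userW, Finset.prod_const, Finset.card_univ,
    Fintype.card_fin] at h1
  obtain ⟨t⟩ : Nonempty (Fin n) := ⟨⟨0, Nat.pos_of_ne_zero hn⟩⟩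
  have h3 := sum_userW_le_one hp0 hp1 (q ζ θ t)
  have h4 : 0 ≤ ∑ u, userW p (q ζ θ t) u := Finset.sum_nonneg fun u _ => hw t u
  rw [sum_userW] at h3 h4
  exact le_antisymm h3 (by
    by_contra! hlt
    exact absurd h1 (not_le.mpr (pow_lt_one₀ h4 hlt hn)))

end Law

theorem mul_exp_neg_le_inv_pow {n m : ℕ} {α y : ℝ} (hn : 0 < n) (hm : (m : ℝ) ≤ (n : ℝ) ^ α)
    (hy : (α + 10) * Real.log n ≤ y) : m * Real.exp (-y) ≤ 1 / (n : ℝ) ^ 10 := by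
  have hn' : (0 : ℝ) < n := by exact_mod_cast hn
  rw [Real.rpow_def_of_pos hn'] at hm
  have e : (n : ℝ) ^ 10 = Real.exp (10 * Real.log n) := by
    rw [← Real.exp_log (pow_pos hn' 10), Real.log_pow]; norm_num
  calc m * Real.exp (-y) ≤ Real.exp (Real.log n * α) * Real.exp (-y) :=
        mul_le_mul_of_nonneg_right hm (Real.exp_pos _).le
    _ ≤ Real.exp (-(10 * Real.log n)) := by
        rw [← Real.exp_add]; exact Real.exp_le_exp.mpr (by linarith)
    _ = 1 / (n : ℝ) ^ 10 := by rw [e, Real.exp_neg, one_div]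

theorem ofReal_one_sub_le_of_measure_compl_le {Ω : Type*} [MeasurableSpace Ω] {P : Measure Ω} [IsProbabilityMeasure P]
    {G : Set Ω} {ε : ℝ} (hε : 0 ≤ ε) (h : P Gᶜ ≤ ENNReal.ofReal ε) :
    ENNReal.ofReal (1 - ε) ≤ P G := by
  rw [ENNReal.ofReal_sub _ hε, ENNReal.ofReal_one, tsub_le_iff_right]
  calc 1 = P (G ∪ Gᶜ) := by rw [Set.union_compl_self, measure_univ]
    _ ≤ P G + P Gᶜ := measure_union_le _ _
    _ ≤ P G + ENNReal.ofReal ε := by gcongr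

end RaschRP

open RaschRP in
/-- **Lemma A.3 (Spectral bounds for the item-item Laplacians).**
If `mp ≥ 2`, `np ≥ C κ₂² log n` and `m ≤ n^α`, then with probability at least `1 − 10n^{−10}`:
`np/(4κ₂) ≤ λ_{m−1}(L_L) ≤ λ₁(L_L) ≤ 3np` and
`np/(16κ₁κ₂) ≤ λ_{m−1}(L_{Lz}) ≤ λ₁(L_{Lz}) ≤ np`.
The eigenvalue bounds are expressed through the Rayleigh quotient (Courant–Fischer):
`λ₁(L) ≤ c` iff `vᵀLv ≤ c‖v‖²` for all `v`, and `λ_{m−1}(L) ≥ c` iff `vᵀLv ≥ c‖v‖²`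
for all `v ⊥ 1_m` (these Laplacians annihilate `1_m`). -/
theorem stmt_11 (α : ℝ) (hα : 0 < α) :
    ∃ C : ℝ, 0 < C ∧
      ∀ (n m : ℕ) (p κ₁ κ₂ : ℝ) (Ω : Type) (mΩ : MeasurableSpace Ω) (P : Measure Ω),
        IsProbabilityMeasure P →
        ∀ (ζ : Fin n → ℝ) (θs : Fin m → ℝ) (A X : Ω → Fin n → Fin m → Bool)
          (R : Ω → Fin 1 → Fin n → Fin m → Fin m → Bool),
          0 < p → p ≤ 1 →
          1 ≤ κ₁ → (∀ i j, |θs i - θs j| ≤ Real.log κ₁) →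
          1 ≤ κ₂ → (∀ t i, |ζ t - θs i| ≤ Real.log κ₂) →
          2 ≤ (m : ℝ) * p →
          C * κ₂ ^ 2 * Real.log n ≤ (n : ℝ) * p →
          (m : ℝ) ≤ (n : ℝ) ^ α →
          HasRaschLaw P p ζ θs A X R →
          ENNReal.ofReal (1 - 10 / (n : ℝ) ^ 10) ≤
            P {ω |
              -- (i) spectral bounds for the unweighted Laplacian `L_L`
              (∀ v : Fin m → ℝ, (∑ i, v i) = 0 →
                (n : ℝ) * p / (4 * κ₂) * (∑ i, v i ^ 2) ≤
                  v ⬝ᵥ (lapL (disc (X ω) (R ω 0)) *ᵥ v)) ∧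
              (∀ v : Fin m → ℝ,
                v ⬝ᵥ (lapL (disc (X ω) (R ω 0)) *ᵥ v) ≤ 3 * ((n : ℝ) * p) * (∑ i, v i ^ 2)) ∧
              -- (ii) spectral bounds for the weighted Laplacian `L_{Lz}`
              (∀ v : Fin m → ℝ, (∑ i, v i) = 0 →
                (n : ℝ) * p / (16 * κ₁ * κ₂) * (∑ i, v i ^ 2) ≤
                  v ⬝ᵥ (lapLz θs (disc (X ω) (R ω 0)) *ᵥ v)) ∧
              (∀ v : Fin m → ℝ,
                v ⬝ᵥ (lapLz θs (disc (X ω) (R ω 0)) *ᵥ v) ≤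
                  (n : ℝ) * p * (∑ i, v i ^ 2))} := by
  refine ⟨288 * (α + 10), by linarith, ?_⟩
  intro n m p κ₁ κ₂ Ω mΩ P hP ζ θs A X R hp0 hp1 hκ₁ hθ hκ₂ hζ hmp hnp hm hlaw
  have hn : n ≠ 0 := by
    rintro rfl
    rw [Nat.cast_zero, Real.zero_rpow hα.ne'] at hm
    nlinarith
  have hn1 : (1 : ℝ) ≤ n := by exact_mod_cast Nat.one_le_iff_ne_zero.mpr hn
  have hQ := fun t i => (one_le_q_mul hκ₂ hζ t i).1
  have hQ' := fun t i => (one_le_q_mul hκ₂ hζ t i).2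
  have hq0 : ∀ t i, 0 ≤ q ζ θs t i := fun t i => by by_contra! h; nlinarith [hQ t i]
  have hq1 : ∀ t i, q ζ θs t i ≤ 1 := fun t i => by by_contra! h; nlinarith [hQ' t i]
  have htot := hlaw.sum_bern_mul_pairW_eq_one hp0.le hp1 hq0 hq1 hn
  set μ := p / (3 * κ₂) with hμ
  have hsymm : ∀ u : Fin n → UserData m, (∑ t, userM μ (u t))ᵀ = ∑ t, userM μ (u t) := fun u => by
    rw [Matrix.transpose_sum]
    exact Finset.sum_congr rfl fun t _ => userM_transpose μ (u t)
  set F₁ : (Fin n → UserData m) → ℝ := fun u =>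
    Real.exp (n * μ / 16) * (NormedSpace.exp (∑ t, userM μ (u t))).trace with hF₁
  set F₂ : Fin m → (Fin n → UserData m) → ℝ := fun i u =>
    Real.exp (-(3 / 8) * (n * p)) *
      ∏ t, (if (u t).1 i = true then Real.exp (1 / 4) else 1) with hF₂
  have hF₁0 : ∀ u, 0 ≤ F₁ u := fun u =>
    mul_nonneg (Real.exp_pos _).le (trace_exp_nonneg (hsymm u))
  have hF₂0 : ∀ i u, 0 ≤ F₂ i u := fun i u =>
    mul_nonneg (Real.exp_pos _).le (Finset.prod_nonneg fun t _ => by split_ifs <;> positivity)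
  have hlog : 0 ≤ (α + 10) * Real.log n :=
    mul_nonneg (by linarith) (Real.log_nonneg hn1)
  have hsum : ∑ u : Fin n → UserData m, (∏ t, userW p (q ζ θs t) (u t)) *
      (F₁ u + ∑ i, F₂ i u) ≤ 10 / (n : ℝ) ^ 10 := by
    have h1 : ∑ u : Fin n → UserData m, (∏ t, userW p (q ζ θs t) (u t)) * F₁ u ≤
        1 / (n : ℝ) ^ 10 := by
      have h := sum_prod_userW_mul_trace_exp_le hp0 hp1 hmp hκ₂ htot hQ hQ'
      rw [← hμ] at h
      calc ∑ u : Fin n → UserData m, (∏ t, userW p (q ζ θs t) (u t)) * F₁ u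
          = Real.exp (n * μ / 16) * ∑ u : Fin n → UserData m,
              (∏ t, userW p (q ζ θs t) (u t)) *
                (NormedSpace.exp (∑ t, userM μ (u t))).trace := by
            rw [Finset.mul_sum]
            exact Finset.sum_congr rfl fun u _ => by rw [hF₁]; ring
        _ ≤ Real.exp (n * μ / 16) * (Real.exp (-(7 / 96) * (n * μ)) * m) :=
            mul_le_mul_of_nonneg_left h (Real.exp_pos _).le
        _ = m * Real.exp (-(n * μ / 96)) := by
            rw [← mul_assoc, ← Real.exp_add, mul_comm]
            congr 2; ring
        _ ≤ 1 / (n : ℝ) ^ 10 := by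
            refine mul_exp_neg_le_inv_pow (Nat.pos_of_ne_zero hn) hm ?_
            have e : n * μ / 96 = n * p / (288 * κ₂) := by rw [hμ]; field_simp; ring
            rw [e, le_div_iff₀ (by positivity)]
            nlinarith [mul_le_mul_of_nonneg_left hκ₂ (mul_nonneg hlog (by linarith : 0 ≤ κ₂))]
    have h2 : ∀ i, ∑ u : Fin n → UserData m, (∏ t, userW p (q ζ θs t) (u t)) * F₂ i u ≤
        Real.exp (-(n * p / 16)) := fun i => by
      have h := sum_prod_userW_mul_prod_le hp0.le hp1 hq0 hq1 i
      calc ∑ u : Fin n → UserData m, (∏ t, userW p (q ζ θs t) (u t)) * F₂ i u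
          = Real.exp (-(3 / 8) * (n * p)) * ∑ u : Fin n → UserData m,
              (∏ t, userW p (q ζ θs t) (u t)) *
                ∏ t, (if (u t).1 i = true then Real.exp (1 / 4) else 1) := by
            rw [Finset.mul_sum]
            exact Finset.sum_congr rfl fun u _ => by rw [hF₂]; ring
        _ ≤ Real.exp (-(3 / 8) * (n * p)) * Real.exp (5 / 16 * (n * p)) :=
            mul_le_mul_of_nonneg_left h (Real.exp_pos _).le
        _ = Real.exp (-(n * p / 16)) := by rw [← Real.exp_add]; congr 1; ring
    have h3 : (m : ℝ) * Real.exp (-(n * p / 16)) ≤ 1 / (n : ℝ) ^ 10 := by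
      refine mul_exp_neg_le_inv_pow (Nat.pos_of_ne_zero hn) hm ?_
      have : 1 ≤ κ₂ ^ 2 := one_le_pow₀ hκ₂
      nlinarith [mul_le_mul_of_nonneg_left this hlog]
    have h4 : (0 : ℝ) ≤ 1 / (n : ℝ) ^ 10 := by positivity
    calc ∑ u : Fin n → UserData m, (∏ t, userW p (q ζ θs t) (u t)) * (F₁ u + ∑ i, F₂ i u)
        = (∑ u : Fin n → UserData m, (∏ t, userW p (q ζ θs t) (u t)) * F₁ u) +
            ∑ i, ∑ u : Fin n → UserData m, (∏ t, userW p (q ζ θs t) (u t)) * F₂ i u := by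
          rw [Finset.sum_comm, ← Finset.sum_add_distrib]
          exact Finset.sum_congr rfl fun u _ => by rw [mul_add, Finset.mul_sum]
      _ ≤ 1 / (n : ℝ) ^ 10 + ∑ _i : Fin m, Real.exp (-(n * p / 16)) :=
          add_le_add h1 (Finset.sum_le_sum fun i _ => h2 i)
      _ ≤ 1 / (n : ℝ) ^ 10 + 1 / (n : ℝ) ^ 10 := by
          rw [Finset.sum_const, Finset.card_univ, Fintype.card_fin, nsmul_eq_mul]
          linarith
      _ ≤ 10 / (n : ℝ) ^ 10 := by
          have e : (10 : ℝ) / (n : ℝ) ^ 10 = 10 * (1 / (n : ℝ) ^ 10) := by ring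
          linarith
  refine ofReal_one_sub_le_of_measure_compl_le (by positivity) ?_
  refine (measure_le_ofReal_sum_mul P (Φ := userData A X R)
    (fun u => Finset.prod_nonneg fun t _ => userW_nonneg hp0.le hp1 (hq0 t) (hq1 t) (u t))
    hlaw.measure_userData_le
    (fun u => add_nonneg (hF₁0 u) (Finset.sum_nonneg fun i _ => hF₂0 i u))
    (fun ω hω => ?_)).trans (ENNReal.ofReal_le_ofReal hsum)
  by_contra! hlt
  refine hω ?_
  have hS0 : 0 ≤ ∑ i, F₂ i (userData A X R ω) := Finset.sum_nonneg fun i _ => hF₂0 i _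
  have hlow : ∀ v : Fin m → ℝ, (∑ i, v i) = 0 →
      (n : ℝ) * p / (4 * κ₂) * (∑ i, v i ^ 2) ≤ v ⬝ᵥ (lapL (disc (X ω) (R ω 0)) *ᵥ v) := by
    intro v hv
    have h := le_sum_qForm_of_trace_exp_lt (μ := μ) (userData A X R ω)
      (lt_of_le_of_lt (by linarith) hlt : F₁ (userData A X R ω) < 1) hv
    rw [dotProduct_lapL]
    have e : (n : ℝ) * p / (4 * κ₂) = 3 / 4 * (n * μ) := by rw [hμ]; field_simp
    rw [e]
    exact h
  have hupp : ∀ v : Fin m → ℝ,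
      v ⬝ᵥ (lapL (disc (X ω) (R ω 0)) *ᵥ v) ≤ 3 * ((n : ℝ) * p) * (∑ i, v i ^ 2) := by
    intro v
    have h := dotProduct_lapL_le (x := X ω) (fun t => hlaw.1 ω 0 t) (D := 3 / 2 * (n * p))
      (fun i => sum_le_of_prod_exp_lt (fun t => A ω t i)
        (lt_of_le_of_lt (le_trans (Finset.single_le_sum (f := fun i => F₂ i (userData A X R ω))
          (fun i _ => hF₂0 i _) (Finset.mem_univ i)) (le_add_of_nonneg_left (hF₁0 _))) hlt)) v
    linarith
  refine ⟨hlow, hupp, fun v hv => ?_, fun v => ?_⟩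
  · refine le_trans ?_ (le_dotProduct_lapLz hκ₁ hθ _ v)
    have h := mul_le_mul_of_nonneg_left (hlow v hv) (by positivity : 0 ≤ 1 / (4 * κ₁))
    refine le_trans (le_of_eq ?_) h
    field_simp
    ring
  · have h1 := dotProduct_lapLz_le θs (disc (X ω) (R ω 0)) v
    have h2 : 0 ≤ (n : ℝ) * p * ∑ i, v i ^ 2 :=
      mul_nonneg (by positivity) (Finset.sum_nonneg fun i _ => sq_nonneg _)
    linarith [hupp v]
end
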